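/- arXiv:2002.06577 — 2 statements merged into one kernel-verified Lean document; each statement's English description precedes it below -/
import Mathlib

section
/- Let A ∈ ℝ^{n×n}, B ∈ ℝ^{n×m} with (A,B) stabilizable and all eigenvalues of A in the closed unit disc, and let κ̄ ∈ ℕ satisfy κ̄·ω_max < π/2. Then there exist ρ > 1/2 and ε* > 0, depending only on A, B and κ̄, such that for every ε ∈ (0, ε*] the following holds. Let N ∈ ℕ, let a_{ij} ≥ 0 (i,j = 1,…,N) with a_{ii} = 0, let ι_i ∈ {0,1}, set d_in(i) = Σ_j a_{ij}, let L be the Laplacian matrix of the weights (a_{ij}), L̄ = L + diag(ι_1,…,ι_N) with entries ℓ̄_{ij}, D_in = diag(d_in(1),…,d_in(N)), and D̄ = I − (2I + D_in)^{−1} L̄, and assume all eigenvalues of D̄ lie in the open unit disc. Let κ_1, …, κ_N ∈ {0,…,κ̄}, let x_r : ℕ → ℝ^n satisfy x_r(k+1) = A x_r(k), and consider for i = 1,…,N the closed-loop full-state-coupling system x_i(k+1) = A x_i(k) + B u_i(k − κ_i), χ_i(k+1) = A χ_i(k) + B u_i(k − κ_i) + A ζ̄_i(k) − A ζ̂_i(k),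 u_i(k) = −ρ K_ε χ_i(k), where ζ̄_i(k) = (2 + d_in(i))^{−1} [ Σ_{j=1}^N a_{ij}(x_i(k) − x_j(k)) + ι_i (x_i(k) − x_r(k)) ] and ζ̂_i(k) = (2 + d_in(i))^{−1} Σ_{j=1}^N ℓ̄_{ij} χ_j(k), with arbitrary initial data for x_i, χ_i, u_i on {−κ̄, …, 0}. Then x_i(k) − x_r(k) → 0 as k → ∞ for every i = 1, …, N. -/
open Matrix Filter Topology Kronecker
open scoped Classical

noncomputable section

/-- A complex square matrix is Schur stable if all its eigenvalues lie in the open unit disc. -/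
def SchurStableC {ι : Type*} [Fintype ι] [DecidableEq ι] (M : Matrix ι ι ℂ) : Prop :=
  ∀ μ ∈ spectrum ℂ M, ‖μ‖ < 1

/-- A real square matrix is Schur stable if all its (complex) eigenvalues lie in the open
unit disc. -/
def SchurStable {ι : Type*} [Fintype ι] [DecidableEq ι] (M : Matrix ι ι ℝ) : Prop :=
  SchurStableC (M.map Complex.ofReal)

/-- All eigenvalues of a real square matrix lie in the closed unit disc. -/
def EigInClosedUnitDisc {ι : Type*} [Fintype ι] [DecidableEq ι] (M : Matrix ι ι ℝ) : Prop :=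
  ∀ μ ∈ spectrum ℂ (M.map Complex.ofReal), ‖μ‖ ≤ 1

/-- The pair (A,B) is stabilizable. -/
def Stabilizable {n m : ℕ} (A : Matrix (Fin n) (Fin n) ℝ) (B : Matrix (Fin n) (Fin m) ℝ) : Prop :=
  ∃ K : Matrix (Fin m) (Fin n) ℝ, SchurStable (A - B * K)

/-- The pair (C,A) is detectable. -/
def Detectable {n q : ℕ} (C : Matrix (Fin q) (Fin n) ℝ) (A : Matrix (Fin n) (Fin n) ℝ) : Prop :=
  ∃ F : Matrix (Fin n) (Fin q) ℝ, SchurStable (A - F * C)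

/-- `P` is a positive definite solution of the discrete algebraic Riccati equation
`AᵀPA − P − AᵀPB(I + BᵀPB)⁻¹BᵀPA + εI = 0`. -/
def IsDARESol {n m : ℕ} (A : Matrix (Fin n) (Fin n) ℝ) (B : Matrix (Fin n) (Fin m) ℝ)
    (ε : ℝ) (P : Matrix (Fin n) (Fin n) ℝ) : Prop :=
  P.PosDef ∧
    Aᵀ * P * A - P - Aᵀ * P * B * (1 + Bᵀ * P * B)⁻¹ * (Bᵀ * P * A)
      + ε • (1 : Matrix (Fin n) (Fin n) ℝ) = 0

/-- The low-gain feedback `K = (I + BᵀPB)⁻¹BᵀPA`. -/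
def gainK {n m : ℕ} (A : Matrix (Fin n) (Fin n) ℝ) (B : Matrix (Fin n) (Fin m) ℝ)
    (P : Matrix (Fin n) (Fin n) ℝ) : Matrix (Fin m) (Fin n) ℝ :=
  (1 + Bᵀ * P * B)⁻¹ * (Bᵀ * P * A)

/-- `ω_max`: zero if `A` is Schur stable, otherwise the largest `ω ∈ [0,π]` with
`det(e^{iω}I − A) = 0`. -/
def omegaMax {n : ℕ} (A : Matrix (Fin n) (Fin n) ℝ) : ℝ :=
  if SchurStable A then 0
  else sSup {ω : ℝ | ω ∈ Set.Icc 0 Real.pi ∧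
    (Complex.exp (ω * Complex.I) • (1 : Matrix (Fin n) (Fin n) ℂ)
      - A.map Complex.ofReal).det = 0}

/-- In-degree `d_in(i) = Σ_j a_{ij}`. -/
def dIn {N : ℕ} (a : Fin N → Fin N → ℝ) (i : Fin N) : ℝ := ∑ j, a i j

/-- The Laplacian matrix of the weights `a`. -/
def lapL {N : ℕ} (a : Fin N → Fin N → ℝ) : Matrix (Fin N) (Fin N) ℝ :=
  Matrix.of fun i j => if i = j then dIn a i else -a i j

/-- The expanded Laplacian `L̄ = L + diag(ι)`. -/
def lapLbar {N : ℕ} (a : Fin N → Fin N → ℝ) (ι : Fin N → ℝ) : Matrix (Fin N) (Fin N) ℝ :=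
  lapL a + Matrix.diagonal ι

/-- `D̄ = I − (2I + D_in)⁻¹ L̄`. -/
def DbarM {N : ℕ} (a : Fin N → Fin N → ℝ) (ι : Fin N → ℝ) : Matrix (Fin N) (Fin N) ℝ :=
  1 - ((2 : ℝ) • (1 : Matrix (Fin N) (Fin N) ℝ) + Matrix.diagonal (dIn a))⁻¹ * lapLbar a ι

section aux
open scoped ComplexOrder

lemma eig_iff {ι : Type*} [Fintype ι] [DecidableEq ι] (M : Matrix ι ι ℂ) (μ : ℂ) :
    μ ∈ spectrum ℂ M ↔ ∃ v : ι → ℂ, v ≠ 0 ∧ M *ᵥ v = μ • v := by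
  rw [← Matrix.spectrum_toLin', ← Module.End.hasEigenvalue_iff_mem_spectrum]
  constructor
  · intro h
    obtain ⟨v, hv⟩ := h.exists_hasEigenvector
    exact ⟨v, hv.2, by simpa using hv.apply_eq_smul⟩
  · rintro ⟨v, hv, h⟩
    exact Module.End.hasEigenvalue_of_hasEigenvector (x := v)
      ⟨Module.End.mem_eigenspace_iff.2 (by simpa using h), hv⟩

lemma stable_tendsto {V : Type*} [NormedAddCommGroup V] [NormedSpace ℂ V] [FiniteDimensional ℂ V]
    (T : V →ₗ[ℂ] V) (h : ∀ (μ : ℂ) (v : V), v ≠ 0 → T v = μ • v → ‖μ‖ < 1)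
    (s : ℕ → V) (hs : ∀ k, s (k + 1) = T (s k)) : Tendsto s atTop (𝓝 0) := by
  rcases subsingleton_or_nontrivial V with hV | hV
  · have : s = fun _ => 0 := by funext k; exact Subsingleton.elim _ _
    rw [this]; exact tendsto_const_nhds
  have : CompleteSpace V := FiniteDimensional.complete ℂ V
  let S : V →L[ℂ] V := LinearMap.toContinuousLinearMap T
  have hspec : ∀ μ ∈ spectrum ℂ S, ‖μ‖₊ < 1 := by
    intro μ hμ
    have h1 : μ ∈ spectrum ℂ T := by
      have : spectrum ℂ T = spectrum ℂ S := by
        have := AlgEquiv.spectrum_eq (Module.End.toContinuousLinearMap (𝕜 := ℂ) V) T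
        rw [← this]; rfl
      rw [this]; exact hμ
    rw [← Module.End.hasEigenvalue_iff_mem_spectrum] at h1
    obtain ⟨v, hv⟩ := h1.exists_hasEigenvector
    exact h μ v hv.2 hv.apply_eq_smul
  have hr : spectralRadius ℂ S < (1 : NNReal) :=
    spectrum.spectralRadius_lt_of_forall_lt S hspec
  obtain ⟨r, hr1, hr2⟩ := ENNReal.lt_iff_exists_nnreal_btwn.1 hr
  have hg := spectrum.pow_nnnorm_pow_one_div_tendsto_nhds_spectralRadius S
  have hev := hg.eventually_lt_const hr1
  have hr2' : r < 1 := by exact_mod_cast hr2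
  have hpow : Tendsto (fun k => S ^ k) atTop (𝓝 0) := by
    have hb : ∀ᶠ k : ℕ in atTop, ‖S ^ k‖ ≤ (r : ℝ) ^ k := by
      filter_upwards [hev, eventually_gt_atTop 0] with k hk hk0
      have hk0' : (0 : ℝ) < k := by exact_mod_cast hk0
      have := ENNReal.rpow_lt_rpow hk hk0'
      rw [← ENNReal.rpow_mul, one_div, inv_mul_cancel₀ hk0'.ne', ENNReal.rpow_one,
        ENNReal.rpow_natCast] at this
      have h2 : ‖S ^ k‖₊ < r ^ k := by exact_mod_cast this
      exact_mod_cast h2.le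
    exact squeeze_zero_norm' hb
      (tendsto_pow_atTop_nhds_zero_of_lt_one r.2 (by exact_mod_cast hr2'))
  have hsk : ∀ k, s k = (S ^ k) (s 0) := by
    intro k
    induction k with
    | zero => simp
    | succ k ih => rw [hs, ih, pow_succ']; rfl
  have h0 := ((ContinuousLinearMap.apply ℂ V (s 0)).continuous.tendsto 0).comp hpow
  simp only [map_zero] at h0
  exact h0.congr fun k => by simp [hsk k]

/-- Complex algebraic data of the Riccati equation. -/
structure Ric {n m : ℕ} (A : Matrix (Fin n) (Fin n) ℂ) (B : Matrix (Fin n) (Fin m) ℂ)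
    (ε : ℝ) (P : Matrix (Fin n) (Fin n) ℂ) (K : Matrix (Fin m) (Fin n) ℂ) : Prop where
  psd : P.PosSemidef
  gain : (1 + Bᴴ * P * B) * K = Bᴴ * P * A
  eqn : Aᴴ * P * A - P - Aᴴ * P * B * K + (ε : ℂ) • (1 : Matrix (Fin n) (Fin n) ℂ) = 0

/-- Squared norm. -/
def sqn {ι : Type*} [Fintype ι] (x : ι → ℂ) : ℝ := ∑ i, ‖x i‖ ^ 2

/-- Quadratic form. -/
def qf {ι : Type*} [Fintype ι] (M : Matrix ι ι ℂ) (x : ι → ℂ) : ℝ := (star x ⬝ᵥ (M *ᵥ x)).re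

lemma sqn_nonneg {ι : Type*} [Fintype ι] (x : ι → ℂ) : 0 ≤ sqn x :=
  Finset.sum_nonneg fun _ _ => by positivity

lemma sqn_eq_zero {ι : Type*} [Fintype ι] {x : ι → ℂ} (h : sqn x = 0) : x = 0 := by
  funext i
  have := (Finset.sum_eq_zero_iff_of_nonneg (fun i _ => by positivity)).1 h i (Finset.mem_univ _)
  simpa using this

lemma sqn_pos {ι : Type*} [Fintype ι] {x : ι → ℂ} (h : x ≠ 0) : 0 < sqn x :=
  lt_of_le_of_ne (sqn_nonneg x) fun h' => h (sqn_eq_zero h'.symm)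

lemma dot_self {ι : Type*} [Fintype ι] (x : ι → ℂ) : star x ⬝ᵥ x = (sqn x : ℂ) := by
  simp only [dotProduct, sqn, Pi.star_apply, Complex.ofReal_sum]
  refine Finset.sum_congr rfl fun i _ => ?_
  have := Complex.conj_mul' (x i)
  simpa using this

lemma qf_add {ι : Type*} [Fintype ι] (M M' : Matrix ι ι ℂ) (x : ι → ℂ) :
    qf (M + M') x = qf M x + qf M' x := by simp [qf, Matrix.add_mulVec, dotProduct_add]

lemma qf_sub {ι : Type*} [Fintype ι] (M M' : Matrix ι ι ℂ) (x : ι → ℂ) :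
    qf (M - M') x = qf M x - qf M' x := by simp [qf, Matrix.sub_mulVec, dotProduct_sub]

lemma qf_smul {ι : Type*} [Fintype ι] (c : ℝ) (M : Matrix ι ι ℂ) (x : ι → ℂ) :
    qf ((c : ℂ) • M) x = c * qf M x := by simp [qf, Matrix.smul_mulVec, dotProduct_smul]

lemma qf_one {ι : Type*} [Fintype ι] [DecidableEq ι] (x : ι → ℂ) :
    qf (1 : Matrix ι ι ℂ) x = sqn x := by simp [qf, dot_self]

lemma qf_conj {ι κ : Type*} [Fintype ι] [Fintype κ] (M : Matrix κ κ ℂ) (C : Matrix κ ι ℂ)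
    (x : ι → ℂ) : qf (Cᴴ * M * C) x = qf M (C *ᵥ x) := by
  simp only [qf, Matrix.star_mulVec, ← Matrix.mulVec_mulVec, Matrix.dotProduct_mulVec,
    Matrix.vecMul_vecMul]

lemma qf_gram {ι κ : Type*} [Fintype ι] [Fintype κ] [DecidableEq κ] (C : Matrix κ ι ℂ)
    (x : ι → ℂ) : qf (Cᴴ * C) x = sqn (C *ᵥ x) := by
  rw [← qf_one, ← qf_conj, Matrix.mul_one]

lemma qf_nonneg {ι : Type*} [Fintype ι] {M : Matrix ι ι ℂ} (h : M.PosSemidef) (x : ι → ℂ) :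
    0 ≤ qf M x := (Complex.nonneg_iff.1 (h.dotProduct_mulVec_nonneg x)).1

lemma qf_psd_zero {ι : Type*} [Fintype ι] {M : Matrix ι ι ℂ} (h : M.PosSemidef) (x : ι → ℂ)
    (h0 : qf M x = 0) : M *ᵥ x = 0 := by
  rw [← h.dotProduct_mulVec_zero_iff]
  have := (Complex.nonneg_iff.1 (h.dotProduct_mulVec_nonneg x)).2
  exact Complex.ext h0 this.symm

/-- completion of squares -/
lemma Ric.square {n m : ℕ} {A : Matrix (Fin n) (Fin n) ℂ} {B : Matrix (Fin n) (Fin m) ℂ}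
    {ε : ℝ} {P : Matrix (Fin n) (Fin n) ℂ} {K : Matrix (Fin m) (Fin n) ℂ} (h : Ric A B ε P K)
    (U : Matrix (Fin m) (Fin n) ℂ) :
    (A + B * U)ᴴ * P * (A + B * U) = P - (ε : ℂ) • 1 - Uᴴ * U
      + (U + K)ᴴ * (1 + Bᴴ * P * B) * (U + K) := by
  have hg := h.gain
  have hPH : Pᴴ = P := h.psd.1
  have hg' : Kᴴ * (1 + Bᴴ * P * B) = Aᴴ * P * B := by
    have := congrArg conjTranspose hg
    simpa [conjTranspose_mul, hPH, Matrix.mul_assoc] using this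
  have e1 : (U + K)ᴴ * (1 + Bᴴ * P * B) * (U + K) =
      Uᴴ * U + Uᴴ * (Bᴴ * P * B) * U + Uᴴ * (Bᴴ * P * A) + Aᴴ * P * B * U + Aᴴ * P * B * K := by
    rw [← hg, ← hg', conjTranspose_add]
    simp only [Matrix.add_mul, Matrix.mul_add, Matrix.mul_assoc, Matrix.one_mul]
    abel
  have e2 : P = Aᴴ * P * A - Aᴴ * P * B * K + (ε : ℂ) • 1 := by
    have := h.eqn
    have h3 : Aᴴ * P * A - Aᴴ * P * B * K + (ε : ℂ) • 1 - P = 0 := by rw [← this]; abel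
    exact (sub_eq_zero.1 h3).symm
  have e3 : (A + B * U)ᴴ * P * (A + B * U) = Aᴴ * P * A + Uᴴ * (Bᴴ * P * B) * U
      + Uᴴ * (Bᴴ * P * A) + Aᴴ * P * B * U := by
    rw [conjTranspose_add, conjTranspose_mul]
    simp only [Matrix.add_mul, Matrix.mul_add, Matrix.mul_assoc]
    abel
  rw [e1, e3]
  conv_rhs => rw [sub_eq_add_neg, sub_eq_add_neg]; enter [1,1,1]; rw [e2]
  abel

lemma Ric.qf_fb {n m : ℕ} {A : Matrix (Fin n) (Fin n) ℂ} {B : Matrix (Fin n) (Fin m) ℂ}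
    {ε : ℝ} {P : Matrix (Fin n) (Fin n) ℂ} {K : Matrix (Fin m) (Fin n) ℂ} (h : Ric A B ε P K)
    (U : Matrix (Fin m) (Fin n) ℂ) (x : Fin n → ℂ) :
    qf P ((A + B * U) *ᵥ x) = qf P x - ε * sqn x - sqn (U *ᵥ x)
      + qf (1 + Bᴴ * P * B) ((U + K) *ᵥ x) := by
  rw [← qf_conj, h.square U, qf_add, qf_sub, qf_sub, qf_smul, qf_one, qf_gram, qf_conj]

lemma Ric.psdR {n m : ℕ} {A : Matrix (Fin n) (Fin n) ℂ} {B : Matrix (Fin n) (Fin m) ℂ}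
    {ε : ℝ} {P : Matrix (Fin n) (Fin n) ℂ} {K : Matrix (Fin m) (Fin n) ℂ} (h : Ric A B ε P K) :
    (1 + Bᴴ * P * B).PosSemidef :=
  Matrix.PosSemidef.one.add (h.psd.conjTranspose_mul_mul_same B)

lemma Ric.qf_self {n m : ℕ} {A : Matrix (Fin n) (Fin n) ℂ} {B : Matrix (Fin n) (Fin m) ℂ}
    {ε : ℝ} {P : Matrix (Fin n) (Fin n) ℂ} {K : Matrix (Fin m) (Fin n) ℂ} (h : Ric A B ε P K)
    (x : Fin n → ℂ) :
    qf P ((A - B * K) *ᵥ x) = qf P x - ε * sqn x - sqn (K *ᵥ x) := by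
  have := h.qf_fb (-K) x
  have e : sqn (-(K *ᵥ x)) = sqn (K *ᵥ x) := by simp [sqn]
  simpa [Matrix.mul_neg, ← sub_eq_add_neg, Matrix.neg_mulVec, e, qf] using this

lemma Ric.qf_le {n m : ℕ} {A : Matrix (Fin n) (Fin n) ℂ} {B : Matrix (Fin n) (Fin m) ℂ}
    {ε : ℝ} {P : Matrix (Fin n) (Fin n) ℂ} {K : Matrix (Fin m) (Fin n) ℂ} (h : Ric A B ε P K)
    (K' : Matrix (Fin m) (Fin n) ℂ) (x : Fin n → ℂ) :
    qf P x ≤ qf P ((A - B * K') *ᵥ x) + ε * sqn x + sqn (K' *ᵥ x) := by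
  have := h.qf_fb (-K') x
  have e : sqn ((-K') *ᵥ x) = sqn (K' *ᵥ x) := by simp [sqn, Matrix.neg_mulVec]
  rw [e, Matrix.mul_neg, ← sub_eq_add_neg] at this
  have h2 := qf_nonneg h.psdR ((-K' + K) *ᵥ x)
  linarith

lemma qf_single {n : ℕ} (P : Matrix (Fin n) (Fin n) ℂ) (i : Fin n) :
    qf P (Pi.single i 1) = (P i i).re := by
  have : star (Pi.single i (1:ℂ) : Fin n → ℂ) = Pi.single i 1 := by
    rw [← Pi.single_star]; simp
  rw [qf, this]
  simp

lemma psd_entry {n : ℕ} {P : Matrix (Fin n) (Fin n) ℂ} (h : P.PosSemidef) (i j : Fin n) :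
    ‖P i j‖ ≤ ∑ k, (P k k).re := by
  have hnn : ∀ k, 0 ≤ (P k k).re := fun k => by rw [← qf_single]; exact qf_nonneg h _
  obtain ⟨C, hC⟩ : ∃ C : Matrix (Fin n) (Fin n) ℂ, P = Cᴴ * C := by
    open scoped MatrixOrder in
    exact CStarAlgebra.nonneg_iff_eq_star_mul_self.mp h.nonneg
  have hd : ∀ k, (P k k).re = ∑ l, ‖C l k‖ ^ 2 := by
    intro k
    rw [← qf_single, hC, qf_gram]
    simp [sqn]
  have h1 : ‖P i j‖ ≤ ((P i i).re + (P j j).re) / 2 := by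
    rw [hd, hd, hC, Matrix.mul_apply, ← Finset.sum_add_distrib, Finset.sum_div]
    refine (norm_sum_le _ _).trans (Finset.sum_le_sum fun l _ => ?_)
    rw [norm_mul, Matrix.conjTranspose_apply, norm_star]
    nlinarith [sq_nonneg (‖C l i‖ - ‖C l j‖)]
  have h2 : ∀ k, (P k k).re ≤ ∑ k, (P k k).re := fun k =>
    Finset.single_le_sum (f := fun k => (P k k).re) (fun k _ => hnn k) (Finset.mem_univ k)
  linarith [h2 i, h2 j]

lemma qf_le_of_entry {n : ℕ} {P : Matrix (Fin n) (Fin n) ℂ} {t : ℝ} (h : ∀ i j, ‖P i j‖ ≤ t)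
    (y : Fin n → ℂ) : qf P y ≤ t * (∑ i, ‖y i‖) ^ 2 := by
  refine (Complex.re_le_norm _).trans ?_
  rw [sq, Finset.sum_mul_sum, Finset.mul_sum]
  refine (norm_sum_le _ _).trans (Finset.sum_le_sum fun i _ => ?_)
  rw [norm_mul, Matrix.mulVec, dotProduct, Pi.star_apply, norm_star, Finset.mul_sum]
  refine (mul_le_mul_of_nonneg_left (norm_sum_le _ _) (norm_nonneg _)).trans ?_
  rw [Finset.mul_sum]
  refine Finset.sum_le_sum fun j _ => ?_
  rw [norm_mul]
  have := mul_le_mul_of_nonneg_left (h i j) (mul_nonneg (norm_nonneg (y i)) (norm_nonneg (y j)))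
  linarith

lemma ric_bound {n m : ℕ} (A : Matrix (Fin n) (Fin n) ℂ) (B : Matrix (Fin n) (Fin m) ℂ)
    (K' : Matrix (Fin m) (Fin n) ℂ) (hst : SchurStableC (A - B * K')) :
    ∃ C : ℝ, ∀ ε : ℝ, 0 < ε → ε ≤ 1 → ∀ P K, Ric A B ε P K →
      (∀ i j, ‖P i j‖ ≤ C) ∧ (∀ i j, ‖K i j‖ ≤ C) := by
  set Ac := A - B * K' with hAc
  let s : Fin n → ℕ → Fin n → ℂ := fun i p => (Ac ^ p) *ᵥ Pi.single i 1
  have hss : ∀ i p, s i (p + 1) = Ac *ᵥ s i p := by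
    intro i p
    simp only [s, pow_succ', Matrix.mulVec_mulVec]
  have hs : ∀ i, Tendsto (s i) atTop (𝓝 0) := by
    intro i
    refine stable_tendsto Ac.mulVecLin ?_ (s i) (fun p => by simpa using hss i p)
    intro μ v hv h
    exact hst μ ((eig_iff _ _).2 ⟨v, hv, by simpa using h⟩)
  have hg : Tendsto (fun p => ∑ i, (∑ a, ‖s i p a‖) ^ 2) atTop (𝓝 0) := by
    have : Tendsto (fun p => ∑ i, (∑ a, ‖s i p a‖) ^ 2) atTop
        (𝓝 (∑ i : Fin n, (∑ a : Fin n, ‖(0 : Fin n → ℂ) a‖) ^ 2)) := by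
      refine tendsto_finsetSum _ fun i _ => (tendsto_finsetSum _ fun a _ => ?_).pow 2
      exact ((tendsto_pi_nhds.1 (hs i)) a).norm
    simpa using this
  obtain ⟨p, hp⟩ := (hg.eventually_lt_const (show (0 : ℝ) < 1 / 2 by norm_num)).exists
  let C0 := ∑ i, ∑ j ∈ Finset.range p, (sqn (s i j) + sqn (K' *ᵥ s i j))
  refine ⟨1 + 2 * C0, fun ε hε hε1 P K h => ?_⟩
  set t := ∑ k, (P k k).re with ht
  have hent := psd_entry h.psd
  have hit : ∀ i q, qf P (s i 0) ≤ qf P (s i q)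
      + ∑ j ∈ Finset.range q, (sqn (s i j) + sqn (K' *ᵥ s i j)) := by
    intro i q
    induction q with
    | zero => simp
    | succ q ih =>
      rw [Finset.sum_range_succ, hss]
      have h1 := h.qf_le K' (s i q)
      have h2 : ε * sqn (s i q) ≤ 1 * sqn (s i q) :=
        mul_le_mul_of_nonneg_right hε1 (sqn_nonneg _)
      linarith
  have hs0 : ∀ i, qf P (s i 0) = (P i i).re := by
    intro i; rw [← qf_single]; simp only [s, pow_zero, Matrix.one_mulVec]
  have hnn : ∀ k, 0 ≤ (P k k).re := fun k => by rw [← qf_single]; exact qf_nonneg h.psd _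
  have ht0 : 0 ≤ t := Finset.sum_nonneg fun k _ => hnn k
  have hsum : t ≤ t * (∑ i, (∑ a, ‖s i p a‖) ^ 2) + C0 := by
    rw [Finset.mul_sum, ← Finset.sum_add_distrib]
    refine Finset.sum_le_sum fun i _ => ?_
    rw [← hs0]
    have h1 := hit i p
    have h2 := qf_le_of_entry hent (s i p)
    linarith
  have ht2 : t ≤ 2 * C0 := by nlinarith
  refine ⟨fun i j => (hent i j).trans (by linarith), fun i j => ?_⟩
  have h1 := h.qf_self (Pi.single j 1)
  have h2 := qf_nonneg h.psd ((A - B * K) *ᵥ Pi.single j 1)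
  have h3 := sqn_nonneg (Pi.single j 1 : Fin n → ℂ)
  rw [qf_single] at h1
  have h4 : (P j j).re ≤ t :=
    Finset.single_le_sum (f := fun k => (P k k).re) (fun k _ => hnn k) (Finset.mem_univ j)
  have h5 : ‖K i j‖ ^ 2 ≤ sqn (K *ᵥ Pi.single j 1) := by
    have := Finset.single_le_sum (f := fun a => ‖(K *ᵥ Pi.single j 1) a‖ ^ 2)
      (fun a _ => by positivity) (Finset.mem_univ i)
    rw [sqn]
    refine le_trans (le_of_eq ?_) this
    simp
  have h6 : ‖K i j‖ ^ 2 ≤ 2 * C0 := by nlinarith [mul_nonneg hε.le h3]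
  nlinarith [sq_nonneg (‖K i j‖ - 1), norm_nonneg (K i j)]

lemma eig_conj {n : ℕ} (A : Matrix (Fin n) (Fin n) ℂ) (w : Fin n → ℂ) (l : ℂ) (hw : w ≠ 0)
    (h : Aᴴ *ᵥ w = l • w) : star l ∈ spectrum ℂ A := by
  have : l ∈ spectrum ℂ Aᴴ := (eig_iff _ _).2 ⟨w, hw, h⟩
  have h2 : spectrum ℂ (star A) = star (spectrum ℂ A) := spectrum.map_star A
  rw [← Matrix.star_eq_conjTranspose, h2] at this
  exact this

lemma ric_zero {n m : ℕ} {A : Matrix (Fin n) (Fin n) ℂ} {B : Matrix (Fin n) (Fin m) ℂ}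
    {K' : Matrix (Fin m) (Fin n) ℂ} (hst : SchurStableC (A - B * K'))
    (hA : ∀ μ ∈ spectrum ℂ A, ‖μ‖ ≤ 1)
    {P : Matrix (Fin n) (Fin n) ℂ} {K : Matrix (Fin m) (Fin n) ℂ} (h : Ric A B 0 P K) :
    P = 0 := by
  by_contra hP
  have hPH : Pᴴ = P := h.psd.1
  have e1 : Aᴴ * P * (A - B * K) = P := by
    have := h.eqn
    simp only [Complex.ofReal_zero, zero_smul, add_zero] at this
    rw [Matrix.mul_sub, ← sub_eq_zero, ← this]
    simp only [Matrix.mul_assoc]; abel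
  let W : Submodule ℂ (Fin n → ℂ) := LinearMap.range P.mulVecLin
  have hle : W ≤ W.map Aᴴ.mulVecLin := by
    rintro _ ⟨x, rfl⟩
    refine ⟨P *ᵥ ((A - B * K) *ᵥ x), ⟨(A - B * K) *ᵥ x, rfl⟩, ?_⟩
    simp only [Matrix.mulVecLin_apply, Matrix.mulVec_mulVec]
    rw [← Matrix.mul_assoc, e1]
  have hWeq : W = W.map Aᴴ.mulVecLin :=
    Submodule.eq_of_le_of_finrank_le hle (Submodule.finrank_map_le _ _)
  have hmap : ∀ x ∈ W, Aᴴ.mulVecLin x ∈ W := fun x hx => by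
    rw [hWeq]; exact Submodule.mem_map_of_mem hx
  let T : W →ₗ[ℂ] W := Aᴴ.mulVecLin.restrict hmap
  have hsurj : Function.Surjective T := by
    rintro ⟨y, hy⟩
    rw [hWeq] at hy
    obtain ⟨x, hx, hxy⟩ := hy
    exact ⟨⟨x, hx⟩, Subtype.ext hxy⟩
  have hinj : Function.Injective T := LinearMap.injective_iff_surjective.2 hsurj
  have hinj' : ∀ x, P *ᵥ x ≠ 0 → Aᴴ *ᵥ (P *ᵥ x) ≠ 0 := by
    intro x hx h0
    have : T ⟨P *ᵥ x, ⟨x, rfl⟩⟩ = T 0 := by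
      rw [map_zero]; exact Subtype.ext h0
    exact hx (congrArg Subtype.val (hinj this))
  have : Nontrivial W := by
    rw [Submodule.nontrivial_iff_ne_bot]
    intro hb
    apply hP
    have : P.mulVecLin = 0 := LinearMap.range_eq_bot.1 hb
    ext i j
    have := congrFun (congrFun (congrArg DFunLike.coe this) (Pi.single j 1)) i
    simpa using this
  obtain ⟨l, hl⟩ := Module.End.exists_eigenvalue T
  obtain ⟨⟨_, v, rfl⟩, hv⟩ := hl.exists_hasEigenvector
  have hw0 : P *ᵥ v ≠ 0 := fun h0 => hv.2 (Subtype.ext h0)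
  have hw : Aᴴ *ᵥ (P *ᵥ v) = l • (P *ᵥ v) := congrArg Subtype.val hv.apply_eq_smul
  have hl0 : l ≠ 0 := by
    rintro rfl
    exact hinj' v hw0 (by rw [hw, zero_smul])
  have hl1 : ‖l‖ ≤ 1 := by
    have := hA _ (eig_conj A _ _ hw0 hw)
    simpa using this
  have hA0 : P *ᵥ ((A - B * K) *ᵥ v) = l⁻¹ • (P *ᵥ v) := by
    by_contra hne
    refine hinj' ((A - B * K) *ᵥ v - l⁻¹ • v) ?_ ?_
    · rw [Matrix.mulVec_sub, Matrix.mulVec_smul]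
      exact sub_ne_zero.2 hne
    · rw [Matrix.mulVec_sub, Matrix.mulVec_smul, Matrix.mulVec_sub, Matrix.mulVec_smul, hw,
        smul_smul, inv_mul_cancel₀ hl0, one_smul, Matrix.mulVec_mulVec, Matrix.mulVec_mulVec,
        e1, sub_self]
  have hq0 : 0 < qf P v := lt_of_le_of_ne (qf_nonneg h.psd v) fun h0 =>
    hw0 (qf_psd_zero h.psd v h0.symm)
  have hq : qf P ((A - B * K) *ᵥ v) = (‖l‖ ^ 2)⁻¹ * qf P v := by
    have e : star ((A - B * K) *ᵥ v) ⬝ᵥ (P *ᵥ v) = star (l⁻¹) * (star v ⬝ᵥ (P *ᵥ v)) := by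
      have h1 : star ((A - B * K) *ᵥ v) ⬝ᵥ (P *ᵥ v)
          = star (P *ᵥ ((A - B * K) *ᵥ v)) ⬝ᵥ v := by
        rw [Matrix.star_mulVec P, hPH, Matrix.dotProduct_mulVec]
      rw [h1, hA0, star_smul, smul_dotProduct, Matrix.star_mulVec, hPH, Matrix.dotProduct_mulVec,
        smul_eq_mul]
    rw [qf, hA0, dotProduct_smul, e, smul_eq_mul, ← mul_assoc]
    have : l⁻¹ * star l⁻¹ = (((‖l‖ ^ 2)⁻¹ : ℝ) : ℂ) := by
      have := Complex.mul_conj' l⁻¹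
      simpa using this
    rw [this, Complex.re_ofReal_mul, qf]
  have hs := h.qf_self v
  rw [hq, zero_mul, sub_zero] at hs
  have hlp : 0 < ‖l‖ := norm_pos_iff.2 hl0
  have hinv : 1 ≤ (‖l‖ ^ 2)⁻¹ := by
    rw [one_le_inv₀ (by positivity)]; exact pow_le_one₀ hlp.le hl1
  have hKn : sqn (K *ᵥ v) = 0 := by
    have := sqn_nonneg (K *ᵥ v); nlinarith
  have hKv : K *ᵥ v = 0 := sqn_eq_zero hKn
  have hleq : ‖l‖ = 1 := by
    rw [hKn, sub_zero] at hs
    have : (‖l‖ ^ 2)⁻¹ = 1 := by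
      have := mul_right_cancel₀ hq0.ne' (hs.trans (one_mul _).symm); exact this
    rw [inv_eq_one] at this
    exact (pow_eq_one_iff_of_nonneg hlp.le two_ne_zero).1 this
  have hPA : P *ᵥ (A *ᵥ v) = l⁻¹ • (P *ᵥ v) := by
    rw [← hA0, Matrix.sub_mulVec, ← Matrix.mulVec_mulVec, hKv, Matrix.mulVec_zero, sub_zero]
  have hB : Bᴴ *ᵥ (P *ᵥ v) = 0 := by
    have := congrArg (fun M => M *ᵥ v) h.gain
    simp only [← Matrix.mulVec_mulVec, hKv, Matrix.mulVec_zero, hPA, Matrix.mulVec_smul] at this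
    exact (smul_eq_zero.1 this.symm).resolve_left (inv_ne_zero hl0)
  have hfin : (A - B * K')ᴴ *ᵥ (P *ᵥ v) = l • (P *ᵥ v) := by
    rw [conjTranspose_sub, conjTranspose_mul, Matrix.sub_mulVec, ← Matrix.mulVec_mulVec _ K'ᴴ, hB,
      Matrix.mulVec_zero, sub_zero, hw]
  have := hst _ (eig_conj _ _ _ hw0 hfin)
  rw [norm_star, hleq] at this
  exact lt_irrefl _ this

lemma ric_tendsto {n m : ℕ} {A : Matrix (Fin n) (Fin n) ℂ} {B : Matrix (Fin n) (Fin m) ℂ}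
    {K' : Matrix (Fin m) (Fin n) ℂ} (hst : SchurStableC (A - B * K'))
    (hA : ∀ μ ∈ spectrum ℂ A, ‖μ‖ ≤ 1)
    (P : ℝ → Matrix (Fin n) (Fin n) ℂ) (K : ℝ → Matrix (Fin m) (Fin n) ℂ)
    (h : ∀ ε > 0, Ric A B ε (P ε) (K ε)) :
    Tendsto (fun ε => (P ε, K ε)) (𝓝[>] 0) (𝓝 (0, 0)) := by
  obtain ⟨C, hC⟩ := ric_bound A B K' hst
  have hcpt : ∀ a b : ℕ, IsCompact {M : Matrix (Fin a) (Fin b) ℂ | ∀ i j, ‖M i j‖ ≤ C} := by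
    intro a b
    have := isCompact_univ_pi (s := fun _ : Fin a => Set.pi Set.univ
      (fun _ : Fin b => Metric.closedBall (0 : ℂ) C))
      (fun _ => isCompact_univ_pi fun _ => isCompact_closedBall _ _)
    have e : {M : Matrix (Fin a) (Fin b) ℂ | ∀ i j, ‖M i j‖ ≤ C} = Set.pi Set.univ
        (fun _ : Fin a => Set.pi Set.univ (fun _ : Fin b => Metric.closedBall (0 : ℂ) C)) := by
      apply Set.ext
      intro M
      constructor
      · intro hM i _ j _
        rw [mem_closedBall_zero_iff]; exact hM i j
      · intro hM i j
        have := hM i (Set.mem_univ i) j (Set.mem_univ j)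
        rwa [mem_closedBall_zero_iff] at this
    rw [e]; exact this
  refine ((hcpt n n).prod (hcpt m n)).tendsto_nhds_of_unique_mapClusterPt (f := fun ε => (P ε, K ε))
    ?_ ?_
  · filter_upwards [Ioc_mem_nhdsGT (show (0 : ℝ) < 1 by norm_num)] with ε hε
    exact hC ε hε.1 hε.2 _ _ (h ε hε.1)
  · rintro ⟨P0, K0⟩ - hcl
    obtain ⟨U, hU, hUt⟩ := mapClusterPt_iff_ultrafilter.1 hcl
    have hPt : Tendsto P U (𝓝 P0) := (continuous_fst.tendsto _).comp hUt
    have hKt : Tendsto K U (𝓝 K0) := (continuous_snd.tendsto _).comp hUt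
    have hev : ∀ᶠ ε in (U : Filter ℝ), Ric A B ε (P ε) (K ε) :=
      hU (by filter_upwards [self_mem_nhdsWithin] with ε hε using h ε hε)
    have hεt : Tendsto (fun ε : ℝ => ε) U (𝓝 0) := (tendsto_id'.2 hU).mono_right nhdsWithin_le_nhds
    have hεc : Tendsto (fun ε : ℝ => (ε : ℂ)) U (𝓝 ((0 : ℝ) : ℂ)) :=
      (Complex.continuous_ofReal.tendsto 0).comp hεt
    have hmulP : Tendsto (fun ε => Bᴴ * P ε) U (𝓝 (Bᴴ * P0)) :=
      ((continuous_const.matrix_mul continuous_id).tendsto P0).comp hPt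
    have hherm : P0.IsHermitian := by
      have h1 : Tendsto (fun ε => (P ε)ᴴ) U (𝓝 P0ᴴ) :=
        (continuous_id.matrix_conjTranspose.tendsto P0).comp hPt
      refine tendsto_nhds_unique h1 (hPt.congr' ?_)
      filter_upwards [hev] with ε hε using hε.psd.1.symm
    have hR : Ric A B 0 P0 K0 := by
      refine ⟨Matrix.PosSemidef.of_dotProduct_mulVec_nonneg hherm fun x => ?_, ?_, ?_⟩
      · have h1 : Tendsto (fun ε => star x ⬝ᵥ (P ε *ᵥ x)) U (𝓝 (star x ⬝ᵥ (P0 *ᵥ x))) := by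
          have : Continuous fun Q : Matrix (Fin n) (Fin n) ℂ => star x ⬝ᵥ (Q *ᵥ x) :=
            continuous_const.dotProduct (continuous_id.matrix_mulVec continuous_const)
          exact (this.tendsto P0).comp hPt
        refine ge_of_tendsto h1 ?_
        filter_upwards [hev] with ε hε using hε.psd.dotProduct_mulVec_nonneg x
      · have c1 : Continuous fun Q : Matrix (Fin n) (Fin n) ℂ × Matrix (Fin m) (Fin n) ℂ =>
          (1 + Bᴴ * Q.1 * B) * Q.2 - Bᴴ * Q.1 * A := by fun_prop
        have h1 := (c1.tendsto (P0, K0)).comp hUt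
        have h2 : Tendsto (fun _ : ℝ => (0 : Matrix (Fin m) (Fin n) ℂ)) U (𝓝 0) :=
          tendsto_const_nhds
        refine sub_eq_zero.1 (tendsto_nhds_unique h1 (h2.congr' ?_))
        filter_upwards [hev] with ε hε
        exact (sub_eq_zero.2 hε.gain).symm
      · have c1 : Continuous fun Q : Matrix (Fin n) (Fin n) ℂ × Matrix (Fin m) (Fin n) ℂ =>
          Aᴴ * Q.1 * A - Q.1 - Aᴴ * Q.1 * B * Q.2 := by fun_prop
        have h1 := ((c1.tendsto (P0, K0)).comp hUt).add
          (hεc.smul_const (1 : Matrix (Fin n) (Fin n) ℂ))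
        have h2 : Tendsto (fun _ : ℝ => (0 : Matrix (Fin n) (Fin n) ℂ)) U (𝓝 0) :=
          tendsto_const_nhds
        refine tendsto_nhds_unique h1 (h2.congr' ?_)
        filter_upwards [hev] with ε hε
        exact hε.eqn.symm
    have hP0 : P0 = 0 := ric_zero hst hA hR
    have hK0 : K0 = 0 := by
      have := hR.gain
      simpa [hP0] using this
    rw [hP0, hK0]

lemma core {n m : ℕ} {A : Matrix (Fin n) (Fin n) ℂ} {B : Matrix (Fin n) (Fin m) ℂ}
    {K' : Matrix (Fin m) (Fin n) ℂ} (hst : SchurStableC (A - B * K'))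
    (hA : ∀ μ ∈ spectrum ℂ A, ‖μ‖ ≤ 1)
    (P : ℝ → Matrix (Fin n) (Fin n) ℂ) (K : ℝ → Matrix (Fin m) (Fin n) ℂ)
    (h : ∀ ε > 0, Ric A B ε (P ε) (K ε)) (κ : ℕ) (ρ : ℝ) (hρ0 : 0 ≤ ρ)
    (hρ : ∀ z ∈ spectrum ℂ A, ‖z‖ = 1 → 1 ≤ ((ρ : ℂ) * (z ^ κ)⁻¹).re) :
    ∀ᶠ ε in 𝓝[>] (0 : ℝ), ¬ ∃ (z : ℂ) (v : Fin n → ℂ), 1 ≤ ‖z‖ ∧ ‖v‖ = 1 ∧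
      z • v = (A + B * (-(((ρ : ℂ) * (z ^ κ)⁻¹) • K ε))) *ᵥ v := by
  by_contra hcon
  have hfr : ∃ᶠ ε in 𝓝[>] (0 : ℝ), ∃ (z : ℂ) (v : Fin n → ℂ), 1 ≤ ‖z‖ ∧ ‖v‖ = 1 ∧
      z • v = (A + B * (-(((ρ : ℂ) * (z ^ κ)⁻¹) • K ε))) *ᵥ v := hcon
  have hne := frequently_iff_neBot.1 hfr
  let U := Ultrafilter.of (𝓝[>] (0 : ℝ) ⊓ 𝓟 {ε : ℝ | ∃ (z : ℂ) (v : Fin n → ℂ), 1 ≤ ‖z‖ ∧ ‖v‖ = 1 ∧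
      z • v = (A + B * (-(((ρ : ℂ) * (z ^ κ)⁻¹) • K ε))) *ᵥ v})
  have hU := Ultrafilter.of_le (𝓝[>] (0 : ℝ) ⊓ 𝓟 {ε : ℝ | ∃ (z : ℂ) (v : Fin n → ℂ), 1 ≤ ‖z‖ ∧
      ‖v‖ = 1 ∧ z • v = (A + B * (-(((ρ : ℂ) * (z ^ κ)⁻¹) • K ε))) *ᵥ v})
  have hU1 : (U : Filter ℝ) ≤ 𝓝[>] (0 : ℝ) := hU.trans inf_le_left
  have hbad := hU.trans inf_le_right
  rw [le_principal_iff] at hbad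
  have hch : ∀ ε : ℝ, ∃ (z : ℂ) (v : Fin n → ℂ), (∃ (z : ℂ) (v : Fin n → ℂ), 1 ≤ ‖z‖ ∧
      ‖v‖ = 1 ∧ z • v = (A + B * (-(((ρ : ℂ) * (z ^ κ)⁻¹) • K ε))) *ᵥ v) → (1 ≤ ‖z‖ ∧
      ‖v‖ = 1 ∧ z • v = (A + B * (-(((ρ : ℂ) * (z ^ κ)⁻¹) • K ε))) *ᵥ v) := by
    intro ε
    by_cases hb : (∃ (z : ℂ) (v : Fin n → ℂ), 1 ≤ ‖z‖ ∧
      ‖v‖ = 1 ∧ z • v = (A + B * (-(((ρ : ℂ) * (z ^ κ)⁻¹) • K ε))) *ᵥ v)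
    · obtain ⟨z, v, hzv⟩ := hb
      exact ⟨z, v, fun _ => hzv⟩
    · exact ⟨0, 0, fun hb' => absurd hb' hb⟩
  choose z v hzv using hch
  have hev : ∀ᶠ ε in (U : Filter ℝ), 1 ≤ ‖z ε‖ ∧ ‖v ε‖ = 1 ∧
      z ε • v ε = (A + B * (-(((ρ : ℂ) * (z ε ^ κ)⁻¹) • K ε))) *ᵥ v ε := by
    filter_upwards [hbad] with ε hε using hzv ε hε
  have hmu : ∀ᶠ ε in (U : Filter ℝ), ‖(ρ : ℂ) * (z ε ^ κ)⁻¹‖ ≤ ρ := by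
    filter_upwards [hev] with ε hε
    rw [norm_mul, norm_inv, norm_pow, Complex.norm_real, Real.norm_of_nonneg hρ0]
    exact mul_le_of_le_one_right hρ0 (inv_le_one_of_one_le₀ (one_le_pow₀ hε.1))
  -- limits
  obtain ⟨v0, hv0, hvt⟩ := (isCompact_sphere (0 : Fin n → ℂ) 1).ultrafilter_le_nhds (U.map v)
    (by
      rw [le_principal_iff]
      change ∀ᶠ ε in (U : Filter ℝ), v ε ∈ Metric.sphere (0 : Fin n → ℂ) 1
      filter_upwards [hev] with ε hε
      simpa using hε.2.1)
  have hvt : Tendsto v U (𝓝 v0) := hvt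
  obtain ⟨μ0, hμ0, hμt⟩ := (isCompact_closedBall (0 : ℂ) ρ).ultrafilter_le_nhds
    (U.map fun ε => (ρ : ℂ) * (z ε ^ κ)⁻¹)
    (by
      rw [le_principal_iff]
      change ∀ᶠ ε in (U : Filter ℝ), (ρ : ℂ) * (z ε ^ κ)⁻¹ ∈ Metric.closedBall (0 : ℂ) ρ
      filter_upwards [hmu] with ε hε
      simpa using hε)
  have hμt : Tendsto (fun ε => (ρ : ℂ) * (z ε ^ κ)⁻¹) U (𝓝 μ0) := hμt
  have hPK := (ric_tendsto hst hA P K h).mono_left hU1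
  have hPt : Tendsto P U (𝓝 0) := (continuous_fst.tendsto _).comp hPK
  have hKt : Tendsto K U (𝓝 0) := (continuous_snd.tendsto _).comp hPK
  have hv0n : v0 ≠ 0 := by
    rintro rfl
    simp at hv0
  have hzvt : Tendsto (fun ε => z ε • v ε) U (𝓝 (A *ᵥ v0)) := by
    have c : Continuous fun q : ℂ × Matrix (Fin m) (Fin n) ℂ × (Fin n → ℂ) =>
        (A + B * (-(q.1 • q.2.1))) *ᵥ q.2.2 := by fun_prop
    have h1 := (c.tendsto (μ0, 0, v0)).comp (hμt.prodMk_nhds (hKt.prodMk_nhds hvt))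
    simp only [smul_zero, neg_zero, Matrix.mul_zero, add_zero] at h1
    refine h1.congr' ?_
    filter_upwards [hev] with ε hε
    exact hε.2.2.symm
  obtain ⟨i, hi⟩ := Function.ne_iff.1 hv0n
  simp only [Pi.zero_apply] at hi
  have hvi : Tendsto (fun ε => v ε i) U (𝓝 (v0 i)) := (tendsto_pi_nhds.1 hvt) i
  have hzt : Tendsto z U (𝓝 ((A *ᵥ v0) i / v0 i)) := by
    refine (((tendsto_pi_nhds.1 hzvt) i).div hvi hi).congr' ?_
    filter_upwards [hvi.eventually_ne hi] with ε hε
    simp [hε]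
  set z0 := (A *ᵥ v0) i / v0 i
  have hz0e : A *ᵥ v0 = z0 • v0 := tendsto_nhds_unique hzvt (hzt.smul hvt)
  have hz0s : z0 ∈ spectrum ℂ A := (eig_iff _ _).2 ⟨v0, hv0n, hz0e⟩
  have hz01 : 1 ≤ ‖z0‖ := ge_of_tendsto hzt.norm (by filter_upwards [hev] with ε hε using hε.1)
  have hz0n : ‖z0‖ = 1 := le_antisymm (hA _ hz0s) hz01
  have hz00 : z0 ≠ 0 := by
    rw [← norm_pos_iff]; linarith
  have hmut : Tendsto (fun ε => (ρ : ℂ) * (z ε ^ κ)⁻¹) U (𝓝 ((ρ : ℂ) * (z0 ^ κ)⁻¹)) :=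
    ((hzt.pow κ).inv₀ (pow_ne_zero _ hz00)).const_mul _
  have hre : ∀ᶠ ε in (U : Filter ℝ), 3 / 4 < ((ρ : ℂ) * (z ε ^ κ)⁻¹).re := by
    have h1 := (Complex.continuous_re.tendsto _).comp hmut
    exact h1.eventually_const_lt (by linarith [hρ z0 hz0s hz0n])
  set δ : ℝ := 1 / (4 * (1 + ρ) ^ 2) with hδ
  have hδ0 : 0 < δ := by positivity
  have hSt : Tendsto (fun ε => Bᴴ * P ε * B) U (𝓝 0) := by
    have c : Continuous fun Q : Matrix (Fin n) (Fin n) ℂ => Bᴴ * Q * B := by fun_prop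
    have := (c.tendsto 0).comp hPt
    simp only [Matrix.mul_zero, Matrix.zero_mul] at this
    exact this
  have hSe : ∀ᶠ ε in (U : Filter ℝ), ∀ i j, ‖(Bᴴ * P ε * B) i j‖ ≤ δ / (m + 1) := by
    rw [eventually_all]; intro i
    rw [eventually_all]; intro j
    have h1 := ((tendsto_pi_nhds.1 ((tendsto_pi_nhds.1 hSt) i)) j).norm
    simp only [Matrix.zero_apply, norm_zero] at h1
    exact h1.eventually_le_const (by positivity)
  have hpos : ∀ᶠ ε in (U : Filter ℝ), 0 < ε := hU1 self_mem_nhdsWithin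
  obtain ⟨ε, hε0, ⟨hz1, hv1, heq⟩, hmuε, hreε, hSε⟩ :=
    (hpos.and (hev.and (hmu.and (hre.and hSe)))).exists
  set μ := (ρ : ℂ) * (z ε ^ κ)⁻¹
  have hR := h ε hε0
  have hq := hR.qf_fb (-(μ • K ε)) (v ε)
  rw [← heq] at hq
  have e1 : qf (P ε) (z ε • v ε) = ‖z ε‖ ^ 2 * qf (P ε) (v ε) := by
    rw [qf, Matrix.mulVec_smul, dotProduct_smul, star_smul, smul_dotProduct, smul_eq_mul,
      smul_eq_mul, ← mul_assoc]
    have : z ε * star (z ε) = ((‖z ε‖ ^ 2 : ℝ) : ℂ) := by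
      have := Complex.mul_conj' (z ε)
      simpa using this
    rw [this, Complex.re_ofReal_mul, qf]
  have e2 : sqn ((-(μ • K ε)) *ᵥ v ε) = ‖μ‖ ^ 2 * sqn (K ε *ᵥ v ε) := by
    simp [sqn, Matrix.neg_mulVec, Matrix.smul_mulVec, mul_pow, Finset.mul_sum]
  have e3 : (-(μ • K ε) + K ε) *ᵥ v ε = (1 - μ) • (K ε *ᵥ v ε) := by
    rw [← Matrix.smul_mulVec, sub_smul, one_smul, neg_add_eq_sub]
  have e4 : qf (1 + Bᴴ * P ε * B) ((1 - μ) • (K ε *ᵥ v ε))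
      = ‖1 - μ‖ ^ 2 * (sqn (K ε *ᵥ v ε) + qf (Bᴴ * P ε * B) (K ε *ᵥ v ε)) := by
    rw [← qf_one, ← qf_add]
    rw [qf, Matrix.mulVec_smul, dotProduct_smul, star_smul, smul_dotProduct, smul_eq_mul,
      smul_eq_mul, ← mul_assoc]
    have : (1 - μ) * star (1 - μ) = ((‖1 - μ‖ ^ 2 : ℝ) : ℂ) := by
      have := Complex.mul_conj' (1 - μ)
      simpa using this
    rw [this, Complex.re_ofReal_mul, qf]
  rw [e1, e2, e3, e4] at hq
  have e5 : qf (Bᴴ * P ε * B) (K ε *ᵥ v ε) ≤ δ * sqn (K ε *ᵥ v ε) := by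
    refine (qf_le_of_entry hSε _).trans ?_
    have := sq_sum_le_card_mul_sum_sq (s := Finset.univ) (f := fun i => ‖(K ε *ᵥ v ε) i‖)
    simp only [Finset.card_univ, Fintype.card_fin] at this
    calc δ / (m + 1) * (∑ i, ‖(K ε *ᵥ v ε) i‖) ^ 2
        ≤ δ / (m + 1) * (m * sqn (K ε *ᵥ v ε)) := by
          apply mul_le_mul_of_nonneg_left this; positivity
      _ ≤ δ / (m + 1) * ((m + 1) * sqn (K ε *ᵥ v ε)) := by
          apply mul_le_mul_of_nonneg_left _ (by positivity)
          nlinarith [sqn_nonneg (K ε *ᵥ v ε)]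
      _ = δ * sqn (K ε *ᵥ v ε) := by field_simp
  have e6 : ‖1 - μ‖ ^ 2 - ‖μ‖ ^ 2 = 1 - 2 * μ.re := by
    rw [← Complex.normSq_eq_norm_sq, ← Complex.normSq_eq_norm_sq, Complex.normSq_apply,
      Complex.normSq_apply]
    simp; ring
  have e7 : ‖1 - μ‖ ^ 2 ≤ (1 + ρ) ^ 2 := by
    refine pow_le_pow_left₀ (norm_nonneg _) ?_ 2
    refine (norm_sub_le _ _).trans ?_
    simpa using hmuε
  have e8 : ‖1 - μ‖ ^ 2 * δ ≤ 1 / 4 := by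
    calc ‖1 - μ‖ ^ 2 * δ ≤ (1 + ρ) ^ 2 * δ := mul_le_mul_of_nonneg_right e7 hδ0.le
      _ = 1 / 4 := by rw [hδ]; field_simp
  have hvn : v ε ≠ 0 := by
    intro h0; rw [h0] at hv1; simp at hv1
  have hsp := sqn_pos hvn
  have hqn := qf_nonneg hR.psd (v ε)
  have hkn := sqn_nonneg (K ε *ᵥ v ε)
  have hz2 : 1 ≤ ‖z ε‖ ^ 2 := one_le_pow₀ hz1
  have a1 : ‖1 - μ‖ ^ 2 * qf (Bᴴ * P ε * B) (K ε *ᵥ v ε) ≤ 1 / 4 * sqn (K ε *ᵥ v ε) := by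
    calc _ ≤ ‖1 - μ‖ ^ 2 * (δ * sqn (K ε *ᵥ v ε)) :=
          mul_le_mul_of_nonneg_left e5 (by positivity)
      _ = (‖1 - μ‖ ^ 2 * δ) * sqn (K ε *ᵥ v ε) := by ring
      _ ≤ _ := mul_le_mul_of_nonneg_right e8 hkn
  have a2 : (‖1 - μ‖ ^ 2 - ‖μ‖ ^ 2) * sqn (K ε *ᵥ v ε) ≤ -(1 / 2) * sqn (K ε *ᵥ v ε) := by
    apply mul_le_mul_of_nonneg_right _ hkn
    rw [e6]; linarith
  have a3 : 0 < ε * sqn (v ε) := mul_pos hε0 hsp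
  nlinarith

lemma kron {N n : ℕ} (D : Matrix (Fin N) (Fin N) ℂ) (A : Matrix (Fin n) (Fin n) ℂ)
    (hD : SchurStableC D) (hA : ∀ μ ∈ spectrum ℂ A, ‖μ‖ ≤ 1) (z : ℂ) (E : Fin N → Fin n → ℂ)
    (hE : E ≠ 0) (h : ∀ a, ∑ b, D a b • (A *ᵥ E b) = z • E a) : ‖z‖ < 1 := by
  let TD : (Fin N → Fin n → ℂ) →ₗ[ℂ] (Fin N → Fin n → ℂ) :=
    { toFun := fun E a => ∑ b, D a b • E b
      map_add' := fun E F => by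
        funext a; simp [smul_add, Finset.sum_add_distrib]
      map_smul' := fun c E => by
        funext a; simp [Finset.smul_sum, smul_comm c] }
  let TA : (Fin N → Fin n → ℂ) →ₗ[ℂ] (Fin N → Fin n → ℂ) :=
    { toFun := fun E a => A *ᵥ E a
      map_add' := fun E F => by
        funext a; simp [Matrix.mulVec_add]
      map_smul' := fun c E => by
        funext a; simp [Matrix.mulVec_smul] }
  have hcomm : ∀ E, TD (TA E) = TA (TD E) := by
    intro E
    funext a
    change ∑ b, D a b • (A *ᵥ E b) = A *ᵥ (∑ b, D a b • E b)
    rw [Matrix.mulVec_sum]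
    simp only [Matrix.mulVec_smul]
  let W := Module.End.eigenspace (TD ∘ₗ TA) z
  have hW : ∀ F, F ∈ W ↔ TD (TA F) = z • F := fun F => Module.End.mem_eigenspace_iff
  have hmap : ∀ F ∈ W, TD F ∈ W := by
    intro F hF
    rw [hW] at hF ⊢
    rw [← hcomm, hF, map_smul]
  have hEW : E ∈ W := (hW E).2 (funext h)
  have : Nontrivial W := ⟨⟨⟨E, hEW⟩, 0, fun h0 => hE (congrArg Subtype.val h0)⟩⟩
  obtain ⟨l, hl⟩ := Module.End.exists_eigenvalue (TD.restrict hmap)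
  obtain ⟨⟨F, hFW⟩, hF⟩ := hl.exists_hasEigenvector
  have hF0 : F ≠ 0 := fun h0 => hF.2 (Subtype.ext h0)
  have hFl : TD F = l • F := congrArg Subtype.val hF.apply_eq_smul
  have hFz := (hW F).1 hFW
  rw [hcomm, hFl, map_smul] at hFz
  obtain ⟨a, ha⟩ := Function.ne_iff.1 hF0
  obtain ⟨j, hj⟩ := Function.ne_iff.1 ha
  have hl1 : ‖l‖ < 1 := by
    refine hD l ((eig_iff _ _).2 ⟨fun b => F b j, fun h0 => hj (congrFun h0 a), ?_⟩)
    funext b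
    have := congrFun (congrFun hFl b) j
    change (∑ c, D b c • F c) j = _ at this
    simpa [Matrix.mulVec, dotProduct] using this
  by_cases hl0 : l = 0
  · rw [hl0, zero_smul] at hFz
    have : z = 0 := (smul_eq_zero.1 hFz.symm).resolve_right hF0
    simp [this]
  · have : A *ᵥ F a = (z / l) • F a := by
      have := congrFun hFz a
      change l • (A *ᵥ F a) = z • F a at this
      rw [div_eq_inv_mul, mul_smul, ← this, smul_smul, inv_mul_cancel₀ hl0, one_smul]
    have h1 := hA _ ((eig_iff _ _).2 ⟨F a, ha, this⟩)
    rw [norm_div, div_le_one (norm_pos_iff.2 hl0)] at h1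
    linarith

lemma mapC_mul {a b c : ℕ} (M : Matrix (Fin a) (Fin b) ℝ) (M' : Matrix (Fin b) (Fin c) ℝ) :
    (M * M').map Complex.ofReal = M.map Complex.ofReal * M'.map Complex.ofReal := by
  ext i j; simp [Matrix.mul_apply]

lemma mapC_sub {a b : ℕ} (M M' : Matrix (Fin a) (Fin b) ℝ) :
    (M - M').map Complex.ofReal = M.map Complex.ofReal - M'.map Complex.ofReal := by
  ext i j; simp

lemma mapC_add {a b : ℕ} (M M' : Matrix (Fin a) (Fin b) ℝ) :
    (M + M').map Complex.ofReal = M.map Complex.ofReal + M'.map Complex.ofReal := by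
  ext i j; simp

lemma mapC_one {a : ℕ} :
    (1 : Matrix (Fin a) (Fin a) ℝ).map Complex.ofReal = 1 := by
  ext i j; simp [Matrix.one_apply]; split_ifs <;> simp

lemma mapC_smul {a b : ℕ} (c : ℝ) (M : Matrix (Fin a) (Fin b) ℝ) :
    (c • M).map Complex.ofReal = (c : ℂ) • M.map Complex.ofReal := by
  ext i j; simp

lemma mapC_transpose {a b : ℕ} (M : Matrix (Fin a) (Fin b) ℝ) :
    Mᵀ.map Complex.ofReal = (M.map Complex.ofReal)ᴴ := by
  ext i j; simp [Matrix.conjTranspose_apply]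

lemma mapC_psd {a : ℕ} {M : Matrix (Fin a) (Fin a) ℝ} (h : M.PosSemidef) :
    (M.map Complex.ofReal).PosSemidef := by
  obtain ⟨C, hC⟩ : ∃ C : Matrix (Fin a) (Fin a) ℝ, M = Cᵀ * C := by
    open scoped MatrixOrder in
    obtain ⟨C, hC⟩ := CStarAlgebra.nonneg_iff_eq_star_mul_self.mp h.nonneg
    exact ⟨C, by rw [hC, Matrix.star_eq_conjTranspose, conjTranspose_eq_transpose_of_trivial]⟩
  rw [hC, mapC_mul, mapC_transpose]
  exact Matrix.posSemidef_conjTranspose_mul_self _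

lemma ric_of_dare {n m : ℕ} {A : Matrix (Fin n) (Fin n) ℝ} {B : Matrix (Fin n) (Fin m) ℝ}
    {ε : ℝ} {P : Matrix (Fin n) (Fin n) ℝ} (h : IsDARESol A B ε P) :
    Ric (A.map Complex.ofReal) (B.map Complex.ofReal) ε (P.map Complex.ofReal)
      ((gainK A B P).map Complex.ofReal) := by
  have hR : (1 + Bᵀ * P * B).PosDef := by
    have h1 := h.1.posSemidef.conjTranspose_mul_mul_same B
    rw [conjTranspose_eq_transpose_of_trivial] at h1
    exact Matrix.PosDef.one.add_posSemidef h1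
  have hu : IsUnit (1 + Bᵀ * P * B).det := (Matrix.isUnit_iff_isUnit_det _).1 hR.isUnit
  have hg : (1 + Bᵀ * P * B) * gainK A B P = Bᵀ * P * A := by
    rw [gainK, ← Matrix.mul_assoc, Matrix.mul_nonsing_inv _ hu, Matrix.one_mul]
  refine ⟨mapC_psd h.1.posSemidef, ?_, ?_⟩
  · have := congrArg (fun M : Matrix (Fin m) (Fin n) ℝ => M.map Complex.ofReal) hg
    simpa only [mapC_mul, mapC_add, mapC_one, mapC_transpose] using this
  · have h2 : Aᵀ * P * A - P - Aᵀ * P * B * gainK A B P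
        + ε • (1 : Matrix (Fin n) (Fin n) ℝ) = 0 := by
      rw [gainK, ← h.2]; simp only [Matrix.mul_assoc]
    have := congrArg (fun M : Matrix (Fin n) (Fin n) ℝ => M.map Complex.ofReal) h2
    simp only [mapC_mul, mapC_add, mapC_sub, mapC_smul, mapC_one, mapC_transpose] at this
    rw [this]
    ext i j; simp

lemma omega_nonneg {n : ℕ} (A : Matrix (Fin n) (Fin n) ℝ) : 0 ≤ omegaMax A := by
  unfold omegaMax
  split_ifs
  · exact le_rfl
  · exact Real.sSup_nonneg fun ω hω => hω.1.1

lemma arg_le_omega {n : ℕ} (A : Matrix (Fin n) (Fin n) ℝ) (z : ℂ)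
    (hz : z ∈ spectrum ℂ (A.map Complex.ofReal)) (hz1 : ‖z‖ = 1) :
    |z.arg| ≤ omegaMax A := by
  have hns : ¬ SchurStable A := fun hs => by
    have := hs z hz; rw [hz1] at this; exact lt_irrefl _ this
  obtain ⟨v, hv, he⟩ := (eig_iff _ _).1 hz
  have hexp : Complex.exp (z.arg * Complex.I) = z := by
    have := Complex.norm_mul_exp_arg_mul_I z
    simpa [hz1] using this
  have hdet : ∀ (w : ℂ) (y : Fin n → ℂ), y ≠ 0 → A.map Complex.ofReal *ᵥ y = w • y →
      (w • (1 : Matrix (Fin n) (Fin n) ℂ) - A.map Complex.ofReal).det = 0 := by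
    intro w y hy hwy
    refine Matrix.exists_mulVec_eq_zero_iff.1 ⟨y, hy, ?_⟩
    rw [Matrix.sub_mulVec, Matrix.smul_mulVec, Matrix.one_mulVec, hwy, sub_self]
  unfold omegaMax
  rw [if_neg hns]
  refine le_csSup ⟨Real.pi, fun ω hω => hω.1.2⟩ ⟨⟨abs_nonneg _, Complex.abs_arg_le_pi z⟩, ?_⟩
  rcases le_total 0 z.arg with h0 | h0
  · rw [abs_of_nonneg h0, hexp]
    exact hdet z v hv he
  · rw [abs_of_nonpos h0]
    have e : Complex.exp (((-z.arg : ℝ) : ℂ) * Complex.I) = star z := by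
      conv_rhs => rw [← hexp]
      have := Complex.exp_conj (z.arg * Complex.I)
      rw [Complex.star_def, ← this]
      simp
    rw [e]
    refine hdet _ (star v) (by simpa using hv) ?_
    funext i
    have := congrArg star (congrFun he i)
    simpa [Matrix.mulVec, dotProduct] using this

lemma rho_bound {n : ℕ} (A : Matrix (Fin n) (Fin n) ℝ) (κbar : ℕ)
    (hκbar : (κbar : ℝ) * omegaMax A < Real.pi / 2) (κ : ℕ) (hκ : κ ≤ κbar) (z : ℂ)
    (hz : z ∈ spectrum ℂ (A.map Complex.ofReal)) (hz1 : ‖z‖ = 1) :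
    1 ≤ ((((Real.cos (κbar * omegaMax A))⁻¹ : ℝ) : ℂ) * (z ^ κ)⁻¹).re := by
  have harg := arg_le_omega A z hz hz1
  have hom := omega_nonneg A
  have hexp : z = Complex.exp (z.arg * Complex.I) := by
    have := Complex.norm_mul_exp_arg_mul_I z
    simpa [hz1] using this.symm
  have hκ' : (κ : ℝ) ≤ κbar := by exact_mod_cast hκ
  have hc : 0 < Real.cos (κbar * omegaMax A) :=
    Real.cos_pos_of_mem_Ioo ⟨by linarith [Real.pi_pos, mul_nonneg (Nat.cast_nonneg (α := ℝ) κbar) hom],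
      hκbar⟩
  have hre : ((z ^ κ)⁻¹).re = Real.cos (κ * |z.arg|) := by
    rw [hexp, ← Complex.exp_nat_mul, ← Complex.exp_neg]
    have : -((κ : ℂ) * (z.arg * Complex.I)) = ((-(κ * z.arg) : ℝ) : ℂ) * Complex.I := by
      push_cast; ring
    rw [this, Complex.exp_ofReal_mul_I_re, Real.cos_neg, ← hexp, ← Real.cos_abs, abs_mul,
      Nat.abs_cast]
  rw [Complex.re_ofReal_mul, hre, ← inv_mul_cancel₀ hc.ne']
  apply mul_le_mul_of_nonneg_left _ (inv_nonneg.2 hc.le)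
  apply Real.cos_le_cos_of_nonneg_of_le_pi
  · positivity
  · linarith [Real.pi_pos]
  · exact mul_le_mul hκ' harg (abs_nonneg _) (Nat.cast_nonneg _)

/-- closed loop map -/
def clMap {N n : ℕ} (D : Matrix (Fin N) (Fin N) ℂ) (A G : Matrix (Fin n) (Fin n) ℂ)
    (i : Fin N) (κ : ℕ) :
    ((Fin N → Fin n → ℂ) × (Fin (κ + 1) → Fin n → ℂ)) →ₗ[ℂ]
      ((Fin N → Fin n → ℂ) × (Fin (κ + 1) → Fin n → ℂ)) where
  toFun q := (fun a => ∑ b, D a b • (A *ᵥ q.1 b), fun j =>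
    if h : (j : ℕ) < κ then q.2 ⟨j + 1, by omega⟩
    else A *ᵥ q.2 (Fin.last κ) - G *ᵥ (q.2 0 - q.1 i))
  map_add' q r := by
    ext a l
    · simp [Matrix.mulVec_add, smul_add, Finset.sum_add_distrib, mul_add]
    · by_cases h : (a : ℕ) < κ
      · simp [h]
      · simp [h, Matrix.mulVec_add, Matrix.mulVec_sub]; ring
  map_smul' c q := by
    ext a l
    · simp [Matrix.mulVec_smul, Finset.mul_sum]
      exact Finset.sum_congr rfl fun _ _ => by ring
    · by_cases h : (a : ℕ) < κ
      · simp [h]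
      · simp [h, Matrix.mulVec_smul, Matrix.mulVec_sub]; ring

lemma clMap_stable {N n : ℕ} (D : Matrix (Fin N) (Fin N) ℂ) (A G : Matrix (Fin n) (Fin n) ℂ)
    (i : Fin N) (κ : ℕ) (hD : SchurStableC D) (hA : ∀ μ ∈ spectrum ℂ A, ‖μ‖ ≤ 1)
    (hG : ∀ (z : ℂ) (v : Fin n → ℂ), 1 ≤ ‖z‖ → ‖v‖ = 1 → z • v ≠ A *ᵥ v - (z ^ κ)⁻¹ • (G *ᵥ v))
    (z : ℂ) (q : (Fin N → Fin n → ℂ) × (Fin (κ + 1) → Fin n → ℂ)) (hq : q ≠ 0)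
    (h : clMap D A G i κ q = z • q) : ‖z‖ < 1 := by
  by_contra hz
  push Not at hz
  have hz0 : z ≠ 0 := by rw [← norm_pos_iff]; linarith
  obtain ⟨E, X⟩ := q
  have h1 := congrArg Prod.fst h
  have h2 := congrArg Prod.snd h
  have hE : E = 0 := by
    by_contra hE
    exact absurd (kron D A hD hA z E hE (fun a => congrFun h1 a)) (not_lt.2 hz)
  subst hE
  have hX : X ≠ 0 := by
    rintro rfl; exact hq rfl
  have hstep : ∀ j (hj : j < κ), X ⟨j + 1, by omega⟩ = z • X ⟨j, by omega⟩ := by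
    intro j hj
    have := congrFun h2 ⟨j, by omega⟩
    simpa [clMap, hj] using this
  have hpow : ∀ j (hj : j < κ + 1), X ⟨j, hj⟩ = z ^ j • X 0 := by
    intro j
    induction j with
    | zero => intro hj; simp
    | succ j ih =>
      intro hj
      rw [hstep j (by omega), ih (by omega), smul_smul, pow_succ']
  have hlast : A *ᵥ X (Fin.last κ) - G *ᵥ X 0 = z • X (Fin.last κ) := by
    have := congrFun h2 (Fin.last κ)
    simpa [clMap] using this
  have hX0 : X 0 ≠ 0 := by
    intro h0
    apply hX
    funext j
    rw [hpow j j.2, h0, smul_zero]; rfl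
  have hXl : X (Fin.last κ) = z ^ κ • X 0 := hpow κ (by omega)
  have hX0' : X 0 = (z ^ κ)⁻¹ • X (Fin.last κ) := by
    rw [hXl, smul_smul, inv_mul_cancel₀ (pow_ne_zero _ hz0), one_smul]
  have hXl0 : X (Fin.last κ) ≠ 0 := by
    rw [hXl]; exact smul_ne_zero (pow_ne_zero _ hz0) hX0
  rw [hX0', Matrix.mulVec_smul] at hlast
  set v := X (Fin.last κ)
  have hnv : (‖v‖ : ℂ) ≠ 0 := by exact_mod_cast (norm_pos_iff.2 hXl0).ne'
  refine hG z (((‖v‖ : ℂ)⁻¹) • v) hz ?_ ?_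
  · rw [norm_smul, norm_inv, Complex.norm_real, norm_norm, inv_mul_cancel₀ (by exact_mod_cast hnv)]
  · rw [Matrix.mulVec_smul, Matrix.mulVec_smul, smul_comm, ← hlast, smul_sub,
      smul_comm (z ^ κ)⁻¹]

lemma dbar_entry {N : ℕ} (a : Fin N → Fin N → ℝ) (ι : Fin N → ℝ) (ha : ∀ i j, 0 ≤ a i j)
    (i j : Fin N) :
    DbarM a ι i j = (1 : Matrix (Fin N) (Fin N) ℝ) i j - (2 + dIn a i)⁻¹ * lapLbar a ι i j := by
  have hd : ∀ i, 2 + dIn a i ≠ 0 := fun i => by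
    have : 0 ≤ dIn a i := Finset.sum_nonneg fun j _ => ha i j
    positivity
  have : ((2 : ℝ) • (1 : Matrix (Fin N) (Fin N) ℝ) + Matrix.diagonal (dIn a))⁻¹
      = Matrix.diagonal fun i => (2 + dIn a i)⁻¹ := by
    apply Matrix.inv_eq_right_inv
    rw [Matrix.smul_one_eq_diagonal, Matrix.diagonal_add, Matrix.diagonal_mul_diagonal,
      ← Matrix.diagonal_one]
    congr 1
    funext i
    exact mul_inv_cancel₀ (hd i)
  rw [DbarM, this, Matrix.sub_apply, Matrix.diagonal_mul]

lemma lap_sum {N n : ℕ} (a : Fin N → Fin N → ℝ) (ι : Fin N → ℝ) (h0 : ∀ i, a i i = 0)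
    (x : Fin N → Fin n → ℝ) (r : Fin n → ℝ) (i : Fin N) :
    ∑ j, a i j • (x i - x j) + ι i • (x i - r) = ∑ j, lapLbar a ι i j • (x j - r) := by
  have e : ∀ j, lapLbar a ι i j • (x j - r)
      = (if i = j then (dIn a i + ι i) • (x i - r) else 0) - a i j • (x j - r) := by
    intro j
    by_cases hij : i = j
    · subst hij; simp [lapLbar, lapL, h0]
    · simp [lapLbar, lapL, hij, neg_smul]
  rw [Finset.sum_congr rfl fun j _ => e j, Finset.sum_sub_distrib, Finset.sum_ite_eq]
  simp only [Finset.mem_univ, if_true, add_smul, dIn, Finset.sum_smul]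
  have e2 : ∀ j, a i j • (x i - x j) = a i j • (x i - r) - a i j • (x j - r) := by
    intro j; rw [← smul_sub]; congr 1; abel
  rw [Finset.sum_congr rfl fun j _ => e2 j, Finset.sum_sub_distrib]
  abel

/-- complexification -/
def toC {n : ℕ} (v : Fin n → ℝ) : Fin n → ℂ := fun i => (v i : ℂ)

lemma toC_mulVec {a b : ℕ} (M : Matrix (Fin a) (Fin b) ℝ) (v : Fin b → ℝ) :
    toC (M *ᵥ v) = M.map Complex.ofReal *ᵥ toC v := by
  funext i; simp [toC, Matrix.mulVec, dotProduct]

lemma toC_sub {a : ℕ} (v w : Fin a → ℝ) : toC (v - w) = toC v - toC w := by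
  funext i; simp [toC]

lemma toC_sum {a N : ℕ} (c : Fin N → ℝ) (v : Fin N → Fin a → ℝ) :
    toC (∑ b, c b • v b) = ∑ b, (c b : ℂ) • toC (v b) := by
  funext i; simp [toC]

end aux

/-- Theorem 1 of the paper: scalable regulated state synchronization with
full-state coupling in the presence of unknown non-uniform input delays. If
`κ̄·ω_max < π/2`, there exist `ρ > 1/2` and `ε* > 0`, depending only on the agent model
and `κ̄`, such that for every `ε ∈ (0, ε*]`, every network (with `D̄` Schur stable),
all delays `κ_i ∈ {0,…,κ̄}`, and every solution of the closed-loop system,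
`x_i(k) − x_r(k) → 0` for every agent `i`. Time is shifted by `κbar`, so actual time
`k` corresponds to index `k + κbar` for the agent signals, with arbitrary initial data. -/
theorem regulated_sync_fullstate {n m : ℕ}
    (A : Matrix (Fin n) (Fin n) ℝ) (B : Matrix (Fin n) (Fin m) ℝ)
    (hstab : Stabilizable A B) (hA : EigInClosedUnitDisc A)
    (κbar : ℕ) (hκbar : (κbar : ℝ) * omegaMax A < Real.pi / 2)
    (P : ℝ → Matrix (Fin n) (Fin n) ℝ)
    (hP : ∀ ε > (0 : ℝ), IsDARESol A B ε (P ε)) :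
    ∃ ρ : ℝ, 1 / 2 < ρ ∧ ∃ εstar > (0 : ℝ), ∀ ε ∈ Set.Ioc (0 : ℝ) εstar,
      ∀ (N : ℕ) (a : Fin N → Fin N → ℝ) (ι : Fin N → ℝ),
        (∀ i j, 0 ≤ a i j) → (∀ i, a i i = 0) → (∀ i, ι i = 0 ∨ ι i = 1) →
        SchurStable (DbarM a ι) →
        ∀ κ : Fin N → ℕ, (∀ i, κ i ≤ κbar) →
        ∀ xr : ℕ → Fin n → ℝ, (∀ k : ℕ, xr (k + 1) = A.mulVec (xr k)) →
        ∀ (x χ : Fin N → ℕ → Fin n → ℝ) (u : Fin N → ℕ → Fin m → ℝ),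
        (∀ i k, x i (k + κbar + 1)
            = A.mulVec (x i (k + κbar)) + B.mulVec (u i (k + κbar - κ i))) →
        (∀ i k, χ i (k + κbar + 1)
            = A.mulVec (χ i (k + κbar)) + B.mulVec (u i (k + κbar - κ i))
              + A.mulVec ((2 + dIn a i)⁻¹ •
                  (∑ j, a i j • (x i (k + κbar) - x j (k + κbar))
                    + ι i • (x i (k + κbar) - xr k)))
              - A.mulVec ((2 + dIn a i)⁻¹ • ∑ j, lapLbar a ι i j • χ j (k + κbar))) →
        (∀ i k, u i k = -(ρ • (gainK A B (P ε)).mulVec (χ i k))) →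
        ∀ i, Tendsto (fun k => x i (k + κbar) - xr k) atTop (nhds 0) := by
  obtain ⟨K', hK'⟩ := hstab
  have hst : SchurStableC (A.map Complex.ofReal - B.map Complex.ofReal * K'.map Complex.ofReal) := by
    rw [← mapC_mul, ← mapC_sub]; exact hK'
  have hom := omega_nonneg A
  have hc : 0 < Real.cos (κbar * omegaMax A) :=
    Real.cos_pos_of_mem_Ioo ⟨by linarith [Real.pi_pos, mul_nonneg (Nat.cast_nonneg (α := ℝ) κbar) hom],
      hκbar⟩
  set ρ : ℝ := (Real.cos (κbar * omegaMax A))⁻¹ with hρdef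
  have hρ1 : 1 ≤ ρ := (one_le_inv₀ hc).2 (Real.cos_le_one _)
  have hev : ∀ᶠ ε in 𝓝[>] (0 : ℝ), ∀ κ ∈ Finset.range (κbar + 1),
      ¬ ∃ (z : ℂ) (v : Fin n → ℂ), 1 ≤ ‖z‖ ∧ ‖v‖ = 1 ∧
      z • v = (A.map Complex.ofReal + B.map Complex.ofReal *
        (-(((ρ : ℂ) * (z ^ κ)⁻¹) • (gainK A B (P ε)).map Complex.ofReal))) *ᵥ v := by
    rw [Filter.eventually_all_finset]
    intro κ hκ
    exact core hst hA (fun ε => (P ε).map Complex.ofReal)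
      (fun ε => (gainK A B (P ε)).map Complex.ofReal) (fun ε hε => ric_of_dare (hP ε hε)) κ ρ
      (by linarith) (fun z hz hz1 => rho_bound A κbar hκbar κ
        (by simpa [Nat.lt_succ_iff] using hκ) z hz hz1)
  obtain ⟨e0, he0, hsub⟩ := (mem_nhdsGT_iff_exists_Ioc_subset).1 hev
  refine ⟨ρ, by linarith, e0, he0, ?_⟩
  intro ε hε N a ι ha0 haii hι hD κ hκ xr hxr x χ u hx hχ hu i
  have hcore := hsub hε
  set K := gainK A B (P ε) with hK
  let ξ : Fin N → ℕ → Fin n → ℝ := fun b k => x b (k + κbar) - xr k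
  let e : Fin N → ℕ → Fin n → ℝ := fun b k => ξ b k - χ b (k + κbar)
  have hξ : ∀ b k, ξ b (k + 1) = A *ᵥ ξ b k + B *ᵥ u b (k + κbar - κ b) := by
    intro b k
    simp only [ξ]
    rw [show k + 1 + κbar = k + κbar + 1 by ring, hx, hxr, Matrix.mulVec_sub]
    abel
  have R1 : ∀ b k, e b (k + 1) = ∑ c, DbarM a ι b c • (A *ᵥ e c k) := by
    intro b k
    have h1 : e b (k + 1) = A *ᵥ (e b k - (2 + dIn a b)⁻¹ • ∑ c, lapLbar a ι b c • e c k) := by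
      have h2 : ∑ c, lapLbar a ι b c • e c k = ∑ c, lapLbar a ι b c • (x c (k + κbar) - xr k)
          - ∑ c, lapLbar a ι b c • χ c (k + κbar) := by
        rw [← Finset.sum_sub_distrib]
        exact Finset.sum_congr rfl fun c _ => by rw [← smul_sub]
      have h3 : e b (k + 1) = ξ b (k + 1) - χ b (k + κbar + 1) := by
        simp only [e]; rw [show k + 1 + κbar = k + κbar + 1 by ring]
      rw [h3, hξ, hχ, h2, lap_sum a ι haii (fun c => x c (k + κbar)) (xr k) b]
      simp only [e, smul_sub, Matrix.mulVec_sub]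
      abel
    rw [h1]
    have h4 : ∀ c, DbarM a ι b c • (A *ᵥ e c k) = A *ᵥ (DbarM a ι b c • e c k) := fun c => by
      rw [Matrix.mulVec_smul]
    rw [Finset.sum_congr rfl fun c _ => h4 c, ← Matrix.mulVec_sum]
    congr 1
    have h5 : ∀ c, DbarM a ι b c • e c k = (if b = c then e b k else 0)
        - (2 + dIn a b)⁻¹ • lapLbar a ι b c • e c k := by
      intro c
      rw [dbar_entry a ι ha0, sub_smul, mul_smul, Matrix.one_apply]
      congr 1
      split_ifs with hbc
      · rw [hbc, one_smul]
      · rw [zero_smul]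
    rw [Finset.sum_congr rfl fun c _ => h5 c, Finset.sum_sub_distrib, Finset.sum_ite_eq,
      Finset.smul_sum]
    simp
  have R2 : ∀ k, ξ i (k + κ i + 1) = A *ᵥ ξ i (k + κ i) - (ρ • (B * K)) *ᵥ (ξ i k - e i k) := by
    intro k
    have h1 : k + κ i + κbar - κ i = k + κbar := by omega
    rw [hξ, h1, hu, sub_eq_add_neg (A *ᵥ ξ i (k + κ i))]
    congr 1
    have h2 : ξ i k - e i k = χ i (k + κbar) := by simp only [e]; abel
    rw [h2, Matrix.mulVec_neg, Matrix.mulVec_smul, Matrix.smul_mulVec, Matrix.mulVec_mulVec]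
  let T := clMap ((DbarM a ι).map Complex.ofReal) (A.map Complex.ofReal)
    ((ρ • (B * K)).map Complex.ofReal) i (κ i)
  let s : ℕ → (Fin N → Fin n → ℂ) × (Fin (κ i + 1) → Fin n → ℂ) := fun k =>
    (fun b => toC (e b k), fun j => toC (ξ i (k + j)))
  have hs : ∀ k, s (k + 1) = T (s k) := by
    intro k
    refine Prod.ext ?_ ?_
    · funext b
      change toC (e b (k + 1)) = ∑ c, ((DbarM a ι).map Complex.ofReal) b c •
        (A.map Complex.ofReal *ᵥ toC (e c k))
      rw [R1, toC_sum]
      simp only [toC_mulVec, Matrix.map_apply]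
    · funext j
      change toC (ξ i (k + 1 + j)) = if h : (j : ℕ) < κ i then toC (ξ i (k + (j + 1)))
        else A.map Complex.ofReal *ᵥ toC (ξ i (k + κ i)) -
          (ρ • (B * K)).map Complex.ofReal *ᵥ (toC (ξ i (k + 0)) - toC (e i k))
      split_ifs with hj
      · rw [show k + 1 + (j : ℕ) = k + (j + 1) by ring]
      · have : (j : ℕ) = κ i := by have := j.2; omega
        rw [this, show k + 1 + κ i = k + κ i + 1 by ring, R2, toC_sub, toC_mulVec, toC_mulVec,
          toC_sub (ξ i k) (e i k), add_zero]
  have hT : ∀ (μ : ℂ) q, q ≠ 0 → T q = μ • q → ‖μ‖ < 1 := by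
    refine clMap_stable _ _ _ i (κ i) hD hA ?_
    intro z v hz hv heq
    refine hcore (κ i) (Finset.mem_range.2 (Nat.lt_succ_of_le (hκ i))) ⟨z, v, hz, hv, ?_⟩
    rw [heq, Matrix.add_mulVec, Matrix.mul_neg, Matrix.neg_mulVec, ← sub_eq_add_neg, mapC_smul,
      mapC_mul, Matrix.mul_smul, Matrix.smul_mulVec, Matrix.smul_mulVec, smul_smul, mul_comm]
  have hlim := stable_tendsto T hT s hs
  have h2 : Tendsto (fun k => (s k).2 0) atTop (𝓝 0) := by
    have := (((continuous_apply (0 : Fin (κ i + 1))).comp continuous_snd).tendsto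
      (0 : (Fin N → Fin n → ℂ) × (Fin (κ i + 1) → Fin n → ℂ))).comp hlim
    exact this
  rw [tendsto_pi_nhds] at h2 ⊢
  intro l
  have h3 := (Complex.continuous_re.tendsto _).comp (h2 l)
  exact h3
end
end

section
/- Let A ∈ ℝ^{n×n}, B ∈ ℝ^{n×m} with (A,B) stabilizable and all eigenvalues of A in the closed unit disc. For δ > 0 let P_δ be the unique positive definite solution of the discrete algebraic Riccati equation P_δ = Aᵀ P_δ A + δ I − Aᵀ P_δ B (Bᵀ P_δ B + I)^{−1} Bᵀ P_δ A, let F_δ := −(Bᵀ P_δ B + I)^{−1} Bᵀ P_δ A, and let γ_δ := λ_max(Bᵀ P_δ B). Then for every λ ∈ ℂ satisfying | λ − (1 + 1/γ_δ) | < √(1 + γ_δ)/γ_δ, the matrix A + λ B F_δ is Schur stable. -/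
open Matrix Filter Topology Kronecker
open scoped Classical

noncomputable section

theorem aux_quad_re {n : ℕ} (M : Matrix (Fin n) (Fin n) ℝ) (v : Fin n → ℂ) :
    (star v ⬝ᵥ (M.map Complex.ofReal *ᵥ v)).re =
      (fun i => (v i).re) ⬝ᵥ (M *ᵥ fun i => (v i).re) +
      (fun i => (v i).im) ⬝ᵥ (M *ᵥ fun i => (v i).im) := by
  simp only [dotProduct, mulVec, Finset.mul_sum, Complex.re_sum, ← Finset.sum_add_distrib]
  refine Finset.sum_congr rfl fun i _ => Finset.sum_congr rfl fun j _ => ?_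
  simp
  try ring

theorem aux_real {n m : ℕ}
    (A : Matrix (Fin n) (Fin n) ℝ) (B : Matrix (Fin n) (Fin m) ℝ)
    (δ : ℝ) (P : Matrix (Fin n) (Fin n) ℝ)
    (hPpos : P.PosDef)
    (hP : P = Aᵀ * P * A + δ • (1 : Matrix (Fin n) (Fin n) ℝ)
        - Aᵀ * P * B * (Bᵀ * P * B + 1)⁻¹ * (Bᵀ * P * A))
    (F : Matrix (Fin m) (Fin n) ℝ)
    (hF : F = -((Bᵀ * P * B + 1)⁻¹ * (Bᵀ * P * A))) :
    (Bᵀ * P * B).PosSemidef ∧ Bᵀ * P * A = -((Bᵀ * P * B + 1) * F) ∧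
    Aᵀ * P * B = -(Fᵀ * (Bᵀ * P * B + 1)) ∧
    Aᵀ * P * A = P - δ • (1 : Matrix (Fin n) (Fin n) ℝ) + Fᵀ * (Bᵀ * P * B + 1) * F := by
  have hPt : Pᵀ = P := by simpa using hPpos.isHermitian.eq
  have hS : (Bᵀ * P * B).PosSemidef := by
    simpa using hPpos.posSemidef.conjTranspose_mul_mul_same B
  have hR : (Bᵀ * P * B + 1).PosDef := Matrix.PosDef.posSemidef_add hS Matrix.PosDef.one
  have hRu : IsUnit (Bᵀ * P * B + 1).det := hR.det_pos.ne'.isUnit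
  have h1 : Bᵀ * P * A = -((Bᵀ * P * B + 1) * F) := by
    rw [hF, Matrix.mul_neg, neg_neg, Matrix.mul_nonsing_inv_cancel_left _ _ hRu]
  have hRt : (Bᵀ * P * B + 1)ᵀ = Bᵀ * P * B + 1 := by simpa using hR.isHermitian.eq
  have h2 : Aᵀ * P * B = -(Fᵀ * (Bᵀ * P * B + 1)) := by
    have := congrArg Matrix.transpose h1
    rw [Matrix.transpose_neg, Matrix.transpose_mul (Bᵀ * P * B + 1), hRt] at this
    rw [← this]
    simp [Matrix.transpose_mul, hPt, Matrix.mul_assoc]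
  refine ⟨hS, h1, h2, ?_⟩
  have h3 : Aᵀ * P * B * (Bᵀ * P * B + 1)⁻¹ * (Bᵀ * P * A) = Fᵀ * (Bᵀ * P * B + 1) * F := by
    rw [Matrix.mul_assoc, show (Bᵀ * P * B + 1)⁻¹ * (Bᵀ * P * A) = -F by rw [hF, neg_neg], h2]
    simp
  rw [h3] at hP
  nth_rewrite 2 [hP]
  abel

theorem aux_top {m : ℕ} (S : Matrix (Fin m) (Fin m) ℝ) (hS : S.PosSemidef) (γ : ℝ)
    (hγ : IsGreatest (spectrum ℝ S) γ) :
    0 ≤ γ ∧ (γ • (1 : Matrix (Fin m) (Fin m) ℝ) - S).PosSemidef := by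
  constructor
  · have h := hγ.1
    rw [hS.1.spectrum_real_eq_range_eigenvalues] at h
    obtain ⟨i, hi⟩ := h
    rw [← hi]
    exact hS.eigenvalues_nonneg i
  · have hH : (γ • (1 : Matrix (Fin m) (Fin m) ℝ) - S).IsHermitian :=
      Matrix.IsHermitian.sub (by simp [Matrix.IsHermitian]) hS.1
    rw [hH.posSemidef_iff_eigenvalues_nonneg]
    intro i
    simp only [Pi.zero_apply]
    have hm : hH.eigenvalues i ∈ spectrum ℝ (γ • (1 : Matrix (Fin m) (Fin m) ℝ) - S) := by
      rw [hH.spectrum_real_eq_range_eigenvalues]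
      exact ⟨i, rfl⟩
    generalize hH.eigenvalues i = e at hm ⊢
    rw [← Algebra.algebraMap_eq_smul_one, ← spectrum.singleton_sub_eq] at hm
    obtain ⟨a, ha, b, hb, hab⟩ := hm
    have := hγ.2 hb
    rw [Set.mem_singleton_iff] at ha
    subst ha
    rw [← hab]
    exact sub_nonneg.mpr this

theorem aux_disc (γ : ℝ) (h0 : 0 ≤ γ) (lam : ℂ)
    (hlam : ‖lam - (1 + 1 / (γ : ℂ))‖ < Real.sqrt (1 + γ) / γ) :
    (1 - 2 * lam.re) + γ * Complex.normSq (lam - 1) < 0 := by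
  rcases h0.eq_or_lt with rfl | h0
  · simp at hlam
    exact absurd hlam (not_lt.mpr (norm_nonneg _))
  have h1 := pow_lt_pow_left₀ hlam (norm_nonneg _) two_ne_zero
  rw [div_pow, Real.sq_sqrt (by linarith), ← Complex.normSq_eq_norm_sq] at h1
  have h2 : lam - (1 + 1 / (γ : ℂ)) = (lam - 1) - ((1 / γ : ℝ) : ℂ) := by push_cast; ring
  rw [h2, Complex.normSq_apply, lt_div_iff₀ (by positivity)] at h1
  rw [Complex.normSq_apply]
  simp only [Complex.sub_re, Complex.sub_im, Complex.one_re, Complex.one_im, Complex.ofReal_re,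
    Complex.ofReal_im] at h1 ⊢
  have h3 : ((lam.re - 1 - 1 / γ) * (lam.re - 1 - 1 / γ) + (lam.im - 0 - 0) * (lam.im - 0 - 0)) * γ ^ 2
    = γ * (γ * ((lam.re - 1) * (lam.re - 1) + (lam.im - 0) * (lam.im - 0)) - 2 * (lam.re - 1)) + 1 := by
    field_simp
    ring
  rw [h3] at h1
  have : γ * (γ * ((lam.re - 1) * (lam.re - 1) + (lam.im - 0) * (lam.im - 0)) - 2 * (lam.re - 1)) < γ * 1 := by
    linarith
  have := lt_of_mul_lt_mul_left this h0.le
  linarith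

theorem aux_conj {a b : ℕ} (M : Matrix (Fin a) (Fin b) ℝ) :
    (M.map Complex.ofReal)ᴴ = Mᵀ.map Complex.ofReal := by
  ext i j
  simp

theorem aux_mul {a b c : ℕ} (M : Matrix (Fin a) (Fin b) ℝ) (N : Matrix (Fin b) (Fin c) ℝ) :
    (M * N).map Complex.ofReal = M.map Complex.ofReal * N.map Complex.ofReal :=
  Matrix.map_mul (f := Complex.ofRealHom)

theorem aux_lift {n m : ℕ}
    (A : Matrix (Fin n) (Fin n) ℝ) (B : Matrix (Fin n) (Fin m) ℝ)
    (δ : ℝ) (P : Matrix (Fin n) (Fin n) ℝ)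
    (F : Matrix (Fin m) (Fin n) ℝ)
    (h1 : Bᵀ * P * A = -((Bᵀ * P * B + 1) * F))
    (h2 : Aᵀ * P * B = -(Fᵀ * (Bᵀ * P * B + 1)))
    (h3 : Aᵀ * P * A = P - δ • (1 : Matrix (Fin n) (Fin n) ℝ) + Fᵀ * (Bᵀ * P * B + 1) * F)
    (lam : ℂ) :
    (A.map Complex.ofReal + lam • (B * F).map Complex.ofReal)ᴴ * P.map Complex.ofReal *
      (A.map Complex.ofReal + lam • (B * F).map Complex.ofReal) =
    (P - δ • (1 : Matrix (Fin n) (Fin n) ℝ)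
      + (Complex.normSq (lam - 1) • (Fᵀ * (Bᵀ * P * B) * F)
        + (1 - 2 * lam.re) • (Fᵀ * F))).map Complex.ofReal := by
  have e1 : (A.map Complex.ofReal + lam • (B * F).map Complex.ofReal)ᴴ * P.map Complex.ofReal *
      (A.map Complex.ofReal + lam • (B * F).map Complex.ofReal) =
      (Aᵀ * P * A).map Complex.ofReal + lam • (Aᵀ * P * B * F).map Complex.ofReal
      + (starRingEnd ℂ lam) • (Fᵀ * (Bᵀ * P * A)).map Complex.ofReal
      + (starRingEnd ℂ lam * lam) • (Fᵀ * (Bᵀ * P * B) * F).map Complex.ofReal := by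
    rw [Matrix.conjTranspose_add, Matrix.conjTranspose_smul, aux_conj, aux_conj]
    simp only [Matrix.transpose_mul, aux_mul, Matrix.add_mul, Matrix.mul_add, Matrix.smul_mul,
      Matrix.mul_smul, smul_smul, Matrix.mul_assoc, RCLike.star_def]
    module
  rw [e1, h1, h2, h3]
  have e2 : Fᵀ * (Bᵀ * P * B + 1) * F = Fᵀ * (Bᵀ * P * B) * F + Fᵀ * F := by
    simp [Matrix.mul_add, Matrix.add_mul]
  have e3 : Fᵀ * -((Bᵀ * P * B + 1) * F) = -(Fᵀ * (Bᵀ * P * B) * F + Fᵀ * F) := by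
    rw [← e2]; simp [Matrix.mul_assoc]
  have e4 : -(Fᵀ * (Bᵀ * P * B + 1)) * F = -(Fᵀ * (Bᵀ * P * B) * F + Fᵀ * F) := by
    rw [← e2]; simp
  rw [e2, e3, e4]
  generalize Fᵀ * (Bᵀ * P * B) * F = X
  generalize Fᵀ * F = Y
  generalize P - δ • (1 : Matrix (Fin n) (Fin n) ℝ) = Z
  ext i j
  simp only [Matrix.map_apply, Matrix.add_apply, Matrix.neg_apply, Matrix.smul_apply, smul_eq_mul,
    Complex.normSq_apply]
  apply Complex.ext 
  · simp
    ring
  · simp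
    ring_nf
    try simp

/-- low-gain stabilization of a linear uncertain system
(Lemma 2 of the paper, from Lee–Kim–Shim): for any `λ ∈ ℂ` in the disc
`|λ - (1 + 1/γ_δ)| < √(1+γ_δ)/γ_δ`, the matrix `A + λ B F_δ` is Schur stable. -/
theorem lowgain_uncertain_stabilization {n m : ℕ}
    (A : Matrix (Fin n) (Fin n) ℝ) (B : Matrix (Fin n) (Fin m) ℝ)
    (hstab : Stabilizable A B) (hA : EigInClosedUnitDisc A)
    (δ : ℝ) (hδ : 0 < δ) (P : Matrix (Fin n) (Fin n) ℝ)
    (hPpos : P.PosDef)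
    (hP : P = Aᵀ * P * A + δ • (1 : Matrix (Fin n) (Fin n) ℝ)
        - Aᵀ * P * B * (Bᵀ * P * B + 1)⁻¹ * (Bᵀ * P * A))
    (F : Matrix (Fin m) (Fin n) ℝ)
    (hF : F = -((Bᵀ * P * B + 1)⁻¹ * (Bᵀ * P * A)))
    (γ : ℝ) (hγ : IsGreatest (spectrum ℝ (Bᵀ * P * B)) γ)
    (lam : ℂ) (hlam : ‖lam - (1 + 1 / (γ : ℂ))‖ < Real.sqrt (1 + γ) / γ) :
    SchurStableC (A.map Complex.ofReal + lam • (B * F).map Complex.ofReal) := by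
  obtain ⟨hS, h1, h2, h3⟩ := aux_real A B δ P hPpos hP F hF
  obtain ⟨h0, hT⟩ := aux_top _ hS γ hγ
  have hd := aux_disc γ h0 lam hlam
  have hl := aux_lift A B δ P F h1 h2 h3 lam
  set N := A.map Complex.ofReal + lam • (B * F).map Complex.ofReal with hN
  set a := Complex.normSq (lam - 1) with ha
  set b := 1 - 2 * lam.re with hb
  have ha0 : 0 ≤ a := Complex.normSq_nonneg _
  set S := Bᵀ * P * B with hSdef
  have hQ : (Fᵀ * (a • (γ • (1 : Matrix (Fin m) (Fin m) ℝ) - S)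
      + (-b - γ * a) • (1 : Matrix (Fin m) (Fin m) ℝ)) * F).PosSemidef := by
    have := ((hT.smul ha0).add ((Matrix.PosSemidef.one (n := Fin m) (R := ℝ)).smul
      (show 0 ≤ -b - γ * a by linarith))).conjTranspose_mul_mul_same F
    simpa using this
  have hW : a • (Fᵀ * S * F) + b • (Fᵀ * F) =
      -(Fᵀ * (a • (γ • (1 : Matrix (Fin m) (Fin m) ℝ) - S)
      + (-b - γ * a) • (1 : Matrix (Fin m) (Fin m) ℝ)) * F) := by
    simp only [Matrix.mul_add, Matrix.add_mul, Matrix.mul_sub, Matrix.sub_mul, Matrix.mul_smul,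
      Matrix.smul_mul, Matrix.mul_one]
    module
  rw [hW] at hl
  generalize (Fᵀ * (a • (γ • (1 : Matrix (Fin m) (Fin m) ℝ) - S)
      + (-b - γ * a) • (1 : Matrix (Fin m) (Fin m) ℝ)) * F) = Q at hQ hl
  intro μ hμ
  have hev : ∃ v : Fin n → ℂ, v ≠ 0 ∧ N *ᵥ v = μ • v := by
    rw [spectrum.mem_iff, Matrix.isUnit_iff_isUnit_det, isUnit_iff_ne_zero, not_not,
      ← Matrix.exists_mulVec_eq_zero_iff] at hμ
    obtain ⟨v, hv, h⟩ := hμ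
    refine ⟨v, hv, ?_⟩
    rw [Matrix.sub_mulVec, Algebra.algebraMap_eq_smul_one, Matrix.smul_mulVec, Matrix.one_mulVec,
      sub_eq_zero] at h
    exact h.symm
  obtain ⟨v, hv, hNv⟩ := hev
  have hq : star v ⬝ᵥ ((Nᴴ * P.map Complex.ofReal * N) *ᵥ v) =
      ((Complex.normSq μ : ℝ) : ℂ) * (star v ⬝ᵥ (P.map Complex.ofReal *ᵥ v)) := by
    rw [← Matrix.mulVec_mulVec, ← Matrix.mulVec_mulVec, hNv, Matrix.dotProduct_mulVec,
      ← Matrix.star_mulVec, hNv, Matrix.mulVec_smul, star_smul, smul_dotProduct,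
      dotProduct_smul, smul_smul, Complex.normSq_eq_conj_mul_self]
    rfl
  rw [hl] at hq
  have hre := congrArg Complex.re hq
  rw [Complex.re_ofReal_mul, aux_quad_re, aux_quad_re] at hre
  set x : Fin n → ℝ := fun i => (v i).re with hx
  set y : Fin n → ℝ := fun i => (v i).im with hy
  simp only [Matrix.add_mulVec, Matrix.sub_mulVec, Matrix.neg_mulVec, Matrix.smul_mulVec,
    Matrix.one_mulVec, dotProduct_add, dotProduct_sub, dotProduct_neg, dotProduct_smul,
    smul_eq_mul] at hre
  have p1 : 0 ≤ x ⬝ᵥ (P *ᵥ x) := by simpa using hPpos.posSemidef.dotProduct_mulVec_nonneg x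
  have p2 : 0 ≤ y ⬝ᵥ (P *ᵥ y) := by simpa using hPpos.posSemidef.dotProduct_mulVec_nonneg y
  have q1 : 0 ≤ x ⬝ᵥ (Q *ᵥ x) := by simpa using hQ.dotProduct_mulVec_nonneg x
  have q2 : 0 ≤ y ⬝ᵥ (Q *ᵥ y) := by simpa using hQ.dotProduct_mulVec_nonneg y
  have r1 : 0 ≤ x ⬝ᵥ x := Finset.sum_nonneg fun i _ => mul_self_nonneg _
  have r2 : 0 ≤ y ⬝ᵥ y := Finset.sum_nonneg fun i _ => mul_self_nonneg _
  have r : 0 < x ⬝ᵥ x + y ⬝ᵥ y := by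
    refine lt_of_le_of_ne (add_nonneg r1 r2) fun h => hv ?_
    have z1 : x = 0 := dotProduct_self_eq_zero.mp (by linarith)
    have z2 : y = 0 := dotProduct_self_eq_zero.mp (by linarith)
    funext i
    exact Complex.ext (congrFun z1 i) (congrFun z2 i)
  by_contra hcon
  have hcon : 1 ≤ ‖μ‖ := not_lt.mp hcon
  have hn : 1 ≤ Complex.normSq μ := by
    rw [Complex.normSq_eq_norm_sq]
    exact one_le_pow₀ hcon
  have t1 := mul_pos hδ r
  have t2 := mul_le_mul_of_nonneg_right hn (add_nonneg p1 p2)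
  linarith
end
end
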